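/- Let φ₁, φ₂ be GF²-sentences and Σ a signature. Then φ₁ ⊨_Σ φ₂ if and only if for every regular forest model 𝔄 of φ₁ that has finite outdegree there is a model 𝔅 of φ₂ such that: (1) for every a ∈ A there is b ∈ B with (𝔄,a) ∼_Σ (𝔅,b); and (2) for every b ∈ B, either (a) there is a ∈ A with (𝔄,a) ∼_Σ (𝔅,b), or (b) there are elements a_⊥, a₀, a₁, … and a'₀, a'₁, … of A such that a_⊥ ≺ a₀ ≺ a₁ ≺ ⋯ and, for all i ≥ 0, a_i ≺ a'_i and (𝔄,a'_i) ∼^{a_⊥}_Σ (𝔅,b). -/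

import Mathlib

/-! Core: relational two-variable first-order logic with equality (unary and
binary predicates only), the guarded fragment GF², structures, satisfaction,
atomic types, (bounded/delimited) guarded bisimulations, forest structures. -/

namespace GFC

inductive Var : Type
  | x
  | y
deriving DecidableEq

/-- Formulas of two-variable relational FO with equality (variables `x`, `y`). -/
inductive Fml (U B : Type) : Type
  | uatom : U → Var → Fml U B
  | batom : B → Var → Var → Fml U B
  | eqv   : Var → Var → Fml U B
  | fls   : Fml U B
  | neg   : Fml U B → Fml U B
  | conj  : Fml U B → Fml U B → Fml U B
  | disj  : Fml U B → Fml U B → Fml U B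
  | impl  : Fml U B → Fml U B → Fml U B
  | all   : Var → Fml U B → Fml U B
  | ex    : Var → Fml U B → Fml U B

namespace Fml

variable {U B : Type}

def free : Fml U B → Set Var
  | uatom _ v => {v}
  | batom _ v w => {v, w}
  | eqv v w => {v, w}
  | fls => ∅
  | neg φ => φ.free
  | conj φ ψ => φ.free ∪ ψ.free
  | disj φ ψ => φ.free ∪ ψ.free
  | impl φ ψ => φ.free ∪ ψ.free
  | all v φ => φ.free \ {v}
  | ex v φ => φ.free \ {v}

def IsSentence (φ : Fml U B) : Prop := φ.free = ∅

def upreds : Fml U B → Set U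
  | uatom P _ => {P}
  | batom _ _ _ => ∅
  | eqv _ _ => ∅
  | fls => ∅
  | neg φ => φ.upreds
  | conj φ ψ => φ.upreds ∪ ψ.upreds
  | disj φ ψ => φ.upreds ∪ ψ.upreds
  | impl φ ψ => φ.upreds ∪ ψ.upreds
  | all _ φ => φ.upreds
  | ex _ φ => φ.upreds

def bpreds : Fml U B → Set B
  | uatom _ _ => ∅
  | batom R _ _ => {R}
  | eqv _ _ => ∅
  | fls => ∅
  | neg φ => φ.bpreds
  | conj φ ψ => φ.bpreds ∪ ψ.bpreds
  | disj φ ψ => φ.bpreds ∪ ψ.bpreds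
  | impl φ ψ => φ.bpreds ∪ ψ.bpreds
  | all _ φ => φ.bpreds
  | ex _ φ => φ.bpreds

def IsAtom : Fml U B → Prop
  | uatom _ _ => True
  | batom _ _ _ => True
  | eqv _ _ => True
  | _ => False

def IsEqAtom : Fml U B → Prop
  | eqv _ _ => True
  | _ => False

/-- guarded quantifier depth (in GF² formulas every quantifier is guarded) -/
def gdepth : Fml U B → ℕ
  | uatom _ _ => 0
  | batom _ _ _ => 0
  | eqv _ _ => 0
  | fls => 0
  | neg φ => φ.gdepth
  | conj φ ψ => max φ.gdepth ψ.gdepth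
  | disj φ ψ => max φ.gdepth ψ.gdepth
  | impl φ ψ => max φ.gdepth ψ.gdepth
  | all _ φ => φ.gdepth + 1
  | ex _ φ => φ.gdepth + 1

/-- subformulas (including the formula itself) -/
def Subf : Fml U B → Set (Fml U B)
  | uatom P v => {uatom P v}
  | batom R v w => {batom R v w}
  | eqv v w => {eqv v w}
  | fls => {fls}
  | neg φ => insert (neg φ) φ.Subf
  | conj φ ψ => insert (conj φ ψ) (φ.Subf ∪ ψ.Subf)
  | disj φ ψ => insert (disj φ ψ) (φ.Subf ∪ ψ.Subf)
  | impl φ ψ => insert (impl φ ψ) (φ.Subf ∪ ψ.Subf)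
  | all v φ => insert (all v φ) φ.Subf
  | ex v φ => insert (ex v φ) φ.Subf

/-- rename the free variables along `f` (bound variables untouched) -/
def renameFree : (Var → Var) → Fml U B → Fml U B
  | f, uatom P v => uatom P (f v)
  | f, batom R v w => batom R (f v) (f w)
  | f, eqv v w => eqv (f v) (f w)
  | _, fls => fls
  | f, neg φ => neg (renameFree f φ)
  | f, conj φ ψ => conj (renameFree f φ) (renameFree f ψ)
  | f, disj φ ψ => disj (renameFree f φ) (renameFree f ψ)
  | f, impl φ ψ => impl (renameFree f φ) (renameFree f ψ)
  | f, all v φ => all v (renameFree (Function.update f v v) φ)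
  | f, ex v φ => ex v (renameFree (Function.update f v v) φ)

end Fml

/-- The two-variable guarded fragment GF²: quantification only in the guarded
patterns `∀v (α → φ)` and `∃v (α ∧ φ)` with `α` an atom containing all free
variables of `φ` as well as the quantified variable `v`. -/
inductive IsGF2 {U B : Type} : Fml U B → Prop
  | uatom (P : U) (v : Var) : IsGF2 (.uatom P v)
  | batom (R : B) (v w : Var) : IsGF2 (.batom R v w)
  | eqv (v w : Var) : IsGF2 (.eqv v w)
  | fls : IsGF2 .fls
  | neg {φ} : IsGF2 φ → IsGF2 (.neg φ)
  | conj {φ ψ} : IsGF2 φ → IsGF2 ψ → IsGF2 (.conj φ ψ)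
  | disj {φ ψ} : IsGF2 φ → IsGF2 ψ → IsGF2 (.disj φ ψ)
  | impl {φ ψ} : IsGF2 φ → IsGF2 ψ → IsGF2 (.impl φ ψ)
  | allG {v : Var} {α φ : Fml U B} :
      α.IsAtom → IsGF2 φ → φ.free ∪ {v} ⊆ α.free → IsGF2 (.all v (.impl α φ))
  | exG {v : Var} {α φ : Fml U B} :
      α.IsAtom → IsGF2 φ → φ.free ∪ {v} ⊆ α.free → IsGF2 (.ex v (.conj α φ))

/-- openGF²: GF² formulas with exactly one free variable, in which equality is
never used as a guard and which contain no subformula that is a sentence. -/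
def IsOpenGF2 {U B : Type} (φ : Fml U B) : Prop :=
  IsGF2 φ ∧ (∃ v, φ.free = {v}) ∧
  (∀ ψ ∈ φ.Subf, ¬ ψ.IsSentence) ∧
  (∀ ψ ∈ φ.Subf, ∀ (v : Var) (α χ : Fml U B),
      (ψ = .all v (.impl α χ) ∨ ψ = .ex v (.conj α χ)) → ¬ α.IsEqAtom)

/-- relational structures interpreting unary predicates `U` and binary
predicates `B` -/
structure Str (U B : Type) where
  Dom : Type
  nonempty : Nonempty Dom
  u : U → Dom → Prop
  b : B → Dom → Dom → Prop

def upd {D : Type} (σ : Var → D) (v : Var) (d : D) : Var → D :=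
  fun w => if w = v then d else σ w

def Sat {U B : Type} (A : Str U B) : Fml U B → (Var → A.Dom) → Prop
  | .uatom P v, σ => A.u P (σ v)
  | .batom R v w, σ => A.b R (σ v) (σ w)
  | .eqv v w, σ => σ v = σ w
  | .fls, _ => False
  | .neg φ, σ => ¬ Sat A φ σ
  | .conj φ ψ, σ => Sat A φ σ ∧ Sat A ψ σ
  | .disj φ ψ, σ => Sat A φ σ ∨ Sat A ψ σ
  | .impl φ ψ, σ => Sat A φ σ → Sat A ψ σ
  | .all v φ, σ => ∀ d : A.Dom, Sat A φ (upd σ v d)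
  | .ex v φ, σ => ∃ d : A.Dom, Sat A φ (upd σ v d)

/-- truth of a sentence in a structure -/
def SatS {U B : Type} (A : Str U B) (φ : Fml U B) : Prop := ∀ σ, Sat A φ σ

def Entails {U B : Type} (φ ψ : Fml U B) : Prop :=
  ∀ A : Str U B, SatS A φ → SatS A ψ

def Satisfiable {U B : Type} (φ : Fml U B) : Prop := ∃ A : Str U B, SatS A φ

/-- a GF²(Σ)-sentence, for the signature Σ = (SU, SB) -/
def IsGF2Sentence {U B : Type} (SU : Set U) (SB : Set B) (ψ : Fml U B) : Prop :=
  IsGF2 ψ ∧ ψ.IsSentence ∧ ψ.upreds ⊆ SU ∧ ψ.bpreds ⊆ SB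

/-- `φ₁ ⊨_Σ φ₂` : GF²(Σ)-entailment -/
def GF2Entails {U B : Type} (SU : Set U) (SB : Set B) (φ₁ φ₂ : Fml U B) : Prop :=
  ∀ ψ : Fml U B, IsGF2Sentence SU SB ψ → Entails φ₂ ψ → Entails φ₁ ψ

/-- atomic formulas in the variables x, y -/
inductive Atom2 (U B : Type) : Type
  | ua : U → Var → Atom2 U B
  | ba : B → Var → Var → Atom2 U B

def vval {D : Type} (a a' : D) : Var → D
  | .x => a
  | .y => a'

def Atom2.inSig {U B : Type} (SU : Set U) (SB : Set B) : Atom2 U B → Prop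
  | .ua P _ => P ∈ SU
  | .ba R _ _ => R ∈ SB

def Atom2.holds {U B : Type} (A : Str U B) (a a' : A.Dom) : Atom2 U B → Prop
  | .ua P v => A.u P (vval a a' v)
  | .ba R v w => A.b R (vval a a' v) (vval a a' w)

def Atom2.onlyX {U B : Type} : Atom2 U B → Prop
  | .ua _ v => v = Var.x
  | .ba _ v w => v = Var.x ∧ w = Var.x

/-- the atomic 1-type of `a` for the signature `(SU, SB)` (the set of
Σ-atoms in the single variable x satisfied by `a`; this determines the set of
negated atoms as well) -/
def atp1 {U B : Type} (A : Str U B) (SU : Set U) (SB : Set B) (a : A.Dom) :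
    Set (Atom2 U B) :=
  {α | α.onlyX ∧ α.inSig SU SB ∧ α.holds A a a}

/-- the atomic 2-type of `(a, a')` for the signature `(SU, SB)` (the set of
Σ-atoms in x, y satisfied by `(a, a')`; together with `a ≠ a'` this determines
the atomic 2-type) -/
def atp2 {U B : Type} (A : Str U B) (SU : Set U) (SB : Set B) (a a' : A.Dom) :
    Set (Atom2 U B) :=
  {α | α.inSig SU SB ∧ α.holds A a a'}

/-- the atomic 2-type of `(a, a')` is guarded (contains `R x y` or `R y x`
for some binary `R ∈ SB`) -/
def Guarded2 {U B : Type} (A : Str U B) (SB : Set B) (a a' : A.Dom) : Prop :=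
  ∃ R ∈ SB, A.b R a a' ∨ A.b R a' a

/-- GF²(Σ)-bisimulation between structures `A` and `Bm` -/
structure IsBisim {U B : Type} (A Bm : Str U B) (SU : Set U) (SB : Set B)
    (Z : A.Dom → Bm.Dom → Prop) : Prop where
  atom_eq : ∀ {a b}, Z a b → atp1 A SU SB a = atp1 Bm SU SB b
  forth : ∀ {a b}, Z a b → ∀ a', a' ≠ a → Guarded2 A SB a a' →
      ∃ b', b' ≠ b ∧ atp2 A SU SB a a' = atp2 Bm SU SB b b' ∧ Z a' b'
  back : ∀ {a b}, Z a b → ∀ b', b' ≠ b → Guarded2 Bm SB b b' →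
      ∃ a', a' ≠ a ∧ atp2 A SU SB a a' = atp2 Bm SU SB b b' ∧ Z a' b'

/-- `(A, a) ∼_Σ (Bm, b)` -/
def Bisim {U B : Type} (A Bm : Str U B) (SU : Set U) (SB : Set B)
    (a : A.Dom) (b : Bm.Dom) : Prop :=
  ∃ Z, IsBisim A Bm SU SB Z ∧ Z a b

/-- `(A, a) ∼ᵏ_Σ (Bm, b)` : k-GF²(Σ)-bisimilarity -/
def KBisim {U B : Type} (A Bm : Str U B) (SU : Set U) (SB : Set B) :
    ℕ → A.Dom → Bm.Dom → Prop
  | 0, a, b => atp1 A SU SB a = atp1 Bm SU SB b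
  | k+1, a, b => atp1 A SU SB a = atp1 Bm SU SB b ∧
      (∀ a', a' ≠ a → Guarded2 A SB a a' →
        ∃ b', b' ≠ b ∧ atp2 A SU SB a a' = atp2 Bm SU SB b b' ∧
          KBisim A Bm SU SB k a' b') ∧
      (∀ b', b' ≠ b → Guarded2 Bm SB b b' →
        ∃ a', a' ≠ a ∧ atp2 A SU SB a a' = atp2 Bm SU SB b b' ∧
          KBisim A Bm SU SB k a' b')

/-- a (full-signature) atomic 2-type, given as its set of positive atoms,
is guarded -/
def Guarded2Type {U B : Type} (τ : Set (Atom2 U B)) : Prop :=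
  ∃ R : B, Atom2.ba R Var.x Var.y ∈ τ ∨ Atom2.ba R Var.y Var.x ∈ τ

/-- successor-saturated structures -/
def SuccSaturated {U B : Type} (A : Str U B) : Prop :=
  ∀ (a : A.Dom) (τ : Set (Atom2 U B)) (Γ : Set (Fml U B)),
    Guarded2Type τ →
    (∀ ψ ∈ Γ, IsOpenGF2 ψ ∧ ψ.free = {Var.x}) →
    (∀ Γ' : Finset (Fml U B), ↑Γ' ⊆ Γ →
      ∃ a', a' ≠ a ∧ atp2 A Set.univ Set.univ a a' = τ ∧
        ∀ ψ ∈ Γ', Sat A ψ (fun _ => a')) →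
    ∃ b', b' ≠ a ∧ atp2 A Set.univ Set.univ a b' = τ ∧
      ∀ ψ ∈ Γ, Sat A ψ (fun _ => b')

/-- finite outdegree: every element stands in a guarded atomic 2-type (for the
full signature) to only finitely many elements -/
def FiniteOutdeg {U B : Type} (A : Str U B) : Prop :=
  ∀ a : A.Dom, {a' | a' ≠ a ∧ ∃ R : B, A.b R a a' ∨ A.b R a' a}.Finite

/-- Σ-adjacency (edges of the Gaifman graph of the Σ-reduct) -/
def SigAdj {U B : Type} (A : Str U B) (SB : Set B) (a a' : A.Dom) : Prop :=
  a ≠ a' ∧ ∃ R ∈ SB, A.b R a a' ∨ A.b R a' a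

/-- A forest structure: a structure whose Gaifman graph is a forest, directed
by choosing a root for each tree; `parent p c` says that `p` is the
predecessor (parent) of `c`. -/
structure Forest (U B : Type) extends Str U B where
  parent : Dom → Dom → Prop
  parent_unique : ∀ {c p p' : Dom}, parent p c → parent p' c → p = p'
  parent_wf : WellFounded parent
  adj_iff : ∀ a a' : Dom,
    (a ≠ a' ∧ ∃ R : B, b R a a' ∨ b R a' a) ↔ (parent a a' ∨ parent a' a)

namespace Forest

variable {U B : Type}

/-- `a` together with its descendants -/
def desc (F : Forest U B) (a : F.Dom) : Set F.Dom :=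
  {c | Relation.ReflTransGen F.parent a c}

/-- the subtrees rooted at `a` and at `a'` are isomorphic -/
def SubtreeIso (F : Forest U B) (a a' : F.Dom) : Prop :=
  ∃ f : (F.desc a) ≃ (F.desc a'),
    (f ⟨a, Relation.ReflTransGen.refl⟩).val = a' ∧
    (∀ c d : F.desc a, F.parent c.val d.val ↔ F.parent (f c).val (f d).val) ∧
    (∀ (P : U) (c : F.desc a), F.u P c.val ↔ F.u P (f c).val) ∧
    (∀ (R : B) (c d : F.desc a), F.b R c.val d.val ↔ F.b R (f c).val (f d).val)

/-- regular: only finitely many subtrees up to isomorphism -/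
def Regular (F : Forest U B) : Prop :=
  ∃ S : Set F.Dom, S.Finite ∧ ∀ a, ∃ a' ∈ S, F.SubtreeIso a' a

/-- `a ≺ a'` : `a` and `a'` lie in the same Σ-tree and `a` is a proper
ancestor of `a'` -/
def prec (F : Forest U B) (SB : Set B) (a a' : F.Dom) : Prop :=
  Relation.ReflTransGen (SigAdj F.toStr SB) a a' ∧ Relation.TransGen F.parent a a'

end Forest

/-- `a_⊥`-delimited GF²(Σ)-bisimulation: like a GF²(Σ)-bisimulation except that
the back-and-forth conditions are not required at pairs whose first component
is `abot` -/
structure IsPtDelimBisim {U B : Type} (A Bm : Str U B) (SU : Set U) (SB : Set B)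
    (abot : A.Dom) (Z : A.Dom → Bm.Dom → Prop) : Prop where
  atom_eq : ∀ {a b}, Z a b → atp1 A SU SB a = atp1 Bm SU SB b
  forth : ∀ {a b}, Z a b → a ≠ abot → ∀ a', a' ≠ a → Guarded2 A SB a a' →
      ∃ b', b' ≠ b ∧ atp2 A SU SB a a' = atp2 Bm SU SB b b' ∧ Z a' b'
  back : ∀ {a b}, Z a b → a ≠ abot → ∀ b', b' ≠ b → Guarded2 Bm SB b b' →
      ∃ a', a' ≠ a ∧ atp2 A SU SB a a' = atp2 Bm SU SB b b' ∧ Z a' b'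

/-- `(A, a) ∼^{a_⊥}_Σ (Bm, b)` -/
def PtDelimBisim {U B : Type} (A Bm : Str U B) (SU : Set U) (SB : Set B)
    (abot : A.Dom) (a : A.Dom) (b : Bm.Dom) : Prop :=
  ∃ Z, IsPtDelimBisim A Bm SU SB abot Z ∧ Z a b

/-- `A_⊥`-delimited GF²(Σ)-bisimulation between a forest structure `F` and a
structure `Bm`, given by a pair of relations `Z0 (∼⁰)` and `Z1 (∼¹)`. -/
structure IsDelimBisim {U B : Type} (F : Forest U B) (Bm : Str U B)
    (SU : Set U) (SB : Set B) (Abot : Set F.Dom)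
    (Z0 Z1 : F.Dom → Bm.Dom → Prop) : Prop where
  zero : ∀ {a b}, Z0 a b →
    atp1 F.toStr SU SB a = atp1 Bm SU SB b ∧
    (∀ a', a' ≠ a → Guarded2 F.toStr SB a a' →
      ∃ b', b' ≠ b ∧
        ((F.parent a' a ∧ a' ∈ Abot) → Z1 a' b') ∧
        (¬ (F.parent a' a ∧ a' ∈ Abot) → Z0 a' b')) ∧
    (∀ b', b' ≠ b → Guarded2 Bm SB b b' →
      ∃ a', a' ≠ a ∧
        ((F.parent a' a ∧ a' ∈ Abot) → Z1 a' b') ∧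
        (¬ (F.parent a' a ∧ a' ∈ Abot) → Z0 a' b'))
  one : ∀ {a b}, Z1 a b → (∀ p, F.parent p a → p ∉ Abot) →
    atp1 F.toStr SU SB a = atp1 Bm SU SB b ∧
    (∀ a', a' ≠ a → Guarded2 F.toStr SB a a' →
      ∃ b', b' ≠ b ∧
        ((F.parent a a' ∧ a ∈ Abot) → Z0 a' b') ∧
        (¬ (F.parent a a' ∧ a ∈ Abot) → Z1 a' b')) ∧
    (∀ b', b' ≠ b → Guarded2 Bm SB b b' →
      ∃ a', a' ≠ a ∧
        ((F.parent a a' ∧ a ∈ Abot) → Z0 a' b') ∧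
        (¬ (F.parent a a' ∧ a ∈ Abot) → Z1 a' b'))

/-- `(F, a) ∼^{A_⊥}_Σ (Bm, b)` -/
def DelimBisim {U B : Type} (F : Forest U B) (Bm : Str U B)
    (SU : Set U) (SB : Set B) (Abot : Set F.Dom) (a : F.Dom) (b : Bm.Dom) : Prop :=
  ∃ Z0 Z1, IsDelimBisim F Bm SU SB Abot Z0 Z1 ∧ Z0 a b

/-- `cl φ` : the subformulas of `φ` closed under single negation and renaming
of free variables (among x, y) -/
def clSet {U B : Type} (φ : Fml U B) : Set (Fml U B) :=
  {χ | ∃ ψ ∈ φ.Subf, ∃ f : Var → Var,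
      χ = ψ.renameFree f ∨ χ = .neg (ψ.renameFree f)}

/-- a 1-type for `φ₂`: a set of formulas `ψ(x)` from `cl φ₂` such that
`φ₂ ∧ ∃x ⋀ t(x)` is satisfiable -/
def OneType {U B : Type} (φ₂ : Fml U B) (t : Set (Fml U B)) : Prop :=
  t ⊆ clSet φ₂ ∧ (∀ ψ ∈ t, ψ.free ⊆ {Var.x}) ∧
  ∃ (A : Str U B) (a : A.Dom), SatS A φ₂ ∧ ∀ ψ ∈ t, Sat A ψ (fun _ => a)

/-- `tp_Bm(b)` : the 1-type of `b` in `Bm` (w.r.t. `φ₂`) -/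
def tpOf {U B : Type} (Bm : Str U B) (φ₂ : Fml U B) (b : Bm.Dom) :
    Set (Fml U B) :=
  {ψ | ψ ∈ clSet φ₂ ∧ ψ.free ⊆ {Var.x} ∧ Sat Bm ψ (fun _ => b)}

end GFC

namespace GFC

variable {U B : Type}

def Ag1 (A M : Str U B) (SU : Set U) (SB : Set B) (a : A.Dom) (m : M.Dom) : Prop :=
  (∀ P ∈ SU, (A.u P a ↔ M.u P m)) ∧ ∀ R ∈ SB, (A.b R a a ↔ M.b R m m)

def Ag2 (A M : Str U B) (SU : Set U) (SB : Set B) (a a' : A.Dom) (m m' : M.Dom) : Prop :=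
  Ag1 A M SU SB a m ∧ Ag1 A M SU SB a' m' ∧
    ∀ R ∈ SB, (A.b R a a' ↔ M.b R m m') ∧ (A.b R a' a ↔ M.b R m' m)

theorem atp1_iff (A M : Str U B) (SU : Set U) (SB : Set B) (a : A.Dom) (m : M.Dom) :
    atp1 A SU SB a = atp1 M SU SB m ↔ Ag1 A M SU SB a m := by
  constructor
  · intro h
    constructor
    · intro P hP
      have := Set.ext_iff.1 h (Atom2.ua P Var.x)
      simpa [atp1, Atom2.onlyX, Atom2.inSig, Atom2.holds, vval, hP] using this
    · intro R hR
      have := Set.ext_iff.1 h (Atom2.ba R Var.x Var.x)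
      simpa [atp1, Atom2.onlyX, Atom2.inSig, Atom2.holds, vval, hR] using this
  · rintro ⟨h1, h2⟩
    ext α
    rcases α with ⟨P, v⟩ | ⟨R, v, w⟩
    · rcases v <;> simp [atp1, Atom2.onlyX, Atom2.inSig, Atom2.holds, vval]
      intro hP; exact h1 P hP
    · rcases v <;> rcases w <;> simp [atp1, Atom2.onlyX, Atom2.inSig, Atom2.holds, vval]
      intro hP; exact h2 R hP

theorem atp2_iff (A M : Str U B) (SU : Set U) (SB : Set B) (a a' : A.Dom) (m m' : M.Dom) :
    atp2 A SU SB a a' = atp2 M SU SB m m' ↔ Ag2 A M SU SB a a' m m' := by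
  constructor
  · intro h
    have hu : ∀ P ∈ SU, ∀ v, A.u P (vval a a' v) ↔ M.u P (vval m m' v) := by
      intro P hP v
      have := Set.ext_iff.1 h (Atom2.ua P v)
      simpa [atp2, Atom2.inSig, Atom2.holds, hP] using this
    have hb : ∀ R ∈ SB, ∀ v w, A.b R (vval a a' v) (vval a a' w) ↔ M.b R (vval m m' v) (vval m m' w) := by
      intro P hP v w
      have := Set.ext_iff.1 h (Atom2.ba P v w)
      simpa [atp2, Atom2.inSig, Atom2.holds, hP] using this
    exact ⟨⟨fun P hP => hu P hP .x, fun R hR => hb R hR .x .x⟩,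
      ⟨fun P hP => hu P hP .y, fun R hR => hb R hR .y .y⟩,
      fun R hR => ⟨hb R hR .x .y, hb R hR .y .x⟩⟩
  · rintro ⟨⟨h1, h2⟩, ⟨h3, h4⟩, h5⟩
    ext α
    rcases α with ⟨P, v⟩ | ⟨R, v, w⟩
    · rcases v <;> simp only [atp2, Atom2.inSig, Atom2.holds, vval, Set.mem_setOf_eq]
      · exact and_congr_right (fun h => h1 P h)
      · exact and_congr_right (fun h => h3 P h)
    · rcases v <;> rcases w <;> simp only [atp2, Atom2.inSig, Atom2.holds, vval, Set.mem_setOf_eq]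
      · exact and_congr_right (fun h => h2 R h)
      · exact and_congr_right (fun h => (h5 R h).1)
      · exact and_congr_right (fun h => (h5 R h).2)
      · exact and_congr_right (fun h => h4 R h)

theorem Ag2.swap {A M : Str U B} {SU : Set U} {SB : Set B} {a a' : A.Dom} {m m' : M.Dom}
    (h : Ag2 A M SU SB a a' m m') : Ag2 A M SU SB a' a m' m :=
  ⟨h.2.1, h.1, fun R hR => ⟨(h.2.2 R hR).2, (h.2.2 R hR).1⟩⟩

theorem Ag2.guarded {A M : Str U B} {SU : Set U} {SB : Set B} {a a' : A.Dom} {m m' : M.Dom}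
    (h : Ag2 A M SU SB a a' m m') : Guarded2 A SB a a' ↔ Guarded2 M SB m m' := by
  constructor
  · rintro ⟨R, hR, hb⟩
    exact ⟨R, hR, hb.imp (h.2.2 R hR).1.1 (h.2.2 R hR).2.1⟩
  · rintro ⟨R, hR, hb⟩
    exact ⟨R, hR, hb.imp (h.2.2 R hR).1.2 (h.2.2 R hR).2.2⟩

def KS (A M : Str U B) (SU : Set U) (SB : Set B) (Stop : A.Dom → Prop) :
    ℕ → A.Dom → M.Dom → Prop
  | 0, a, b => Ag1 A M SU SB a b
  | k+1, a, b => Ag1 A M SU SB a b ∧ (¬ Stop a →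
      (∀ a', a' ≠ a → Guarded2 A SB a a' →
        ∃ b', b' ≠ b ∧ Ag2 A M SU SB a a' b b' ∧ KS A M SU SB Stop k a' b') ∧
      (∀ b', b' ≠ b → Guarded2 M SB b b' →
        ∃ a', a' ≠ a ∧ Ag2 A M SU SB a a' b b' ∧ KS A M SU SB Stop k a' b'))

theorem KS.ag {A M : Str U B} {SU : Set U} {SB : Set B} {Stop : A.Dom → Prop} {k : ℕ}
    {a : A.Dom} {b : M.Dom} (h : KS A M SU SB Stop k a b) : Ag1 A M SU SB a b := by
  cases k with
  | zero => exact h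
  | succ k => exact h.1

theorem KS.succ {A M : Str U B} {SU : Set U} {SB : Set B} {Stop : A.Dom → Prop} {k : ℕ} :
    ∀ {a : A.Dom} {b : M.Dom}, KS A M SU SB Stop (k+1) a b → KS A M SU SB Stop k a b := by
  induction k with
  | zero => intro a b h; exact h.1
  | succ k ih =>
    intro a b h
    refine ⟨h.1, fun hs => ⟨?_, ?_⟩⟩
    · intro a' h1 h2
      obtain ⟨b', h3, h4, h5⟩ := (h.2 hs).1 a' h1 h2
      exact ⟨b', h3, h4, ih h5⟩
    · intro b' h1 h2
      obtain ⟨a', h3, h4, h5⟩ := (h.2 hs).2 b' h1 h2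
      exact ⟨a', h3, h4, ih h5⟩

theorem KS.mono {A M : Str U B} {SU : Set U} {SB : Set B} {Stop : A.Dom → Prop} {j k : ℕ}
    (hjk : j ≤ k) {a : A.Dom} {b : M.Dom} (h : KS A M SU SB Stop k a b) :
    KS A M SU SB Stop j a b := by
  induction hjk with
  | refl => exact h
  | step _ ih => exact ih h.succ

theorem Sat_congr (A : Str U B) (φ : Fml U B) : ∀ σ τ : Var → A.Dom,
    (∀ v ∈ φ.free, σ v = τ v) → (Sat A φ σ ↔ Sat A φ τ) := by
  induction φ with
  | uatom P v => intro σ τ h; simp [Sat, h v (by simp [Fml.free])]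
  | batom R v w => intro σ τ h; simp [Sat, h v (by simp [Fml.free]), h w (by simp [Fml.free])]
  | eqv v w => intro σ τ h; simp [Sat, h v (by simp [Fml.free]), h w (by simp [Fml.free])]
  | fls => intro σ τ h; simp [Sat]
  | neg φ ih => intro σ τ h; simp only [Sat]; rw [ih σ τ h]
  | conj φ ψ ih1 ih2 =>
    intro σ τ h; simp only [Sat]
    rw [ih1 σ τ (fun v hv => h v (Or.inl hv)), ih2 σ τ (fun v hv => h v (Or.inr hv))]
  | disj φ ψ ih1 ih2 =>
    intro σ τ h; simp only [Sat]
    rw [ih1 σ τ (fun v hv => h v (Or.inl hv)), ih2 σ τ (fun v hv => h v (Or.inr hv))]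
  | impl φ ψ ih1 ih2 =>
    intro σ τ h; simp only [Sat]
    rw [ih1 σ τ (fun v hv => h v (Or.inl hv)), ih2 σ τ (fun v hv => h v (Or.inr hv))]
  | all v φ ih =>
    intro σ τ h; simp only [Sat]
    refine forall_congr' fun d => ih _ _ ?_
    intro w hw
    by_cases e : w = v
    · simp [upd, e]
    · simpa [upd, e] using h w ⟨hw, e⟩
  | ex v φ ih =>
    intro σ τ h; simp only [Sat]
    refine exists_congr fun d => ih _ _ ?_
    intro w hw
    by_cases e : w = v
    · simp [upd, e]
    · simpa [upd, e] using h w ⟨hw, e⟩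

theorem Sat_sentence (A : Str U B) {φ : Fml U B} (h : φ.IsSentence) (σ τ : Var → A.Dom) :
    Sat A φ σ ↔ Sat A φ τ :=
  Sat_congr A φ σ τ (by rw [h]; simp)

theorem SatS_iff (A : Str U B) {φ : Fml U B} (h : φ.IsSentence) (σ : Var → A.Dom) :
    SatS A φ ↔ Sat A φ σ :=
  ⟨fun hs => hs σ, fun hs τ => (Sat_sentence A h σ τ).1 hs⟩

theorem satS_neg (A : Str U B) {φ : Fml U B} (h : φ.IsSentence) :
    SatS A (.neg φ) ↔ ¬ SatS A φ := by
  obtain ⟨d⟩ := A.nonempty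
  rw [SatS_iff A h (fun _ => d), SatS_iff A (φ := .neg φ) h (fun _ => d)]
  rfl

/-- Γ-equivalence of assignments -/
def EqG (M : Str U B) (Γ : Set (Fml U B)) (τ τ' : Var → M.Dom) : Prop :=
  ∀ ψ ∈ Γ, (Sat M ψ τ ↔ Sat M ψ τ')

structure Sys (A M : Str U B) (SU : Set U) (SB : Set B) (Γ : Set (Fml U B))
    (Z : ℕ → A.Dom → M.Dom → Prop) : Prop where
  ag : ∀ {k a m}, Z k a m → Ag1 A M SU SB a m
  mono : ∀ {k a m}, Z (k+1) a m → Z k a m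
  hl : ∀ k a, ∃ m, Z k a m
  hr : ∀ k m, ∃ a, Z k a m
  forth : ∀ {k a m}, Z (k+1) a m → ∀ a', a' ≠ a → Guarded2 A SB a a' →
    ∃ m0 m', m' ≠ m0 ∧ Ag2 A M SU SB a a' m0 m' ∧ Z k a m0 ∧ Z k a' m' ∧
      EqG M Γ (fun _ => m) (fun _ => m0)
  back : ∀ {k a m}, Z (k+1) a m → ∃ m0, Z k a m0 ∧ EqG M Γ (fun _ => m) (fun _ => m0) ∧
    ∀ m', m' ≠ m0 → Guarded2 M SB m0 m' → ∃ a' m0', a' ≠ a ∧ m0' ≠ m0 ∧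
      Ag2 A M SU SB a a' m0 m0' ∧ Z k a' m0' ∧
      ∀ v, EqG M Γ (upd (fun _ => m0) v m') (upd (fun _ => m0) v m0')

structure PC (A M : Str U B) (SU : Set U) (SB : Set B) (Z : A.Dom → M.Dom → Prop) (V : Set Var)
    (σ : Var → A.Dom) (τ : Var → M.Dom) : Prop where
  z : ∀ v ∈ V, Z (σ v) (τ v)
  eq : ∀ v ∈ V, ∀ w ∈ V, (σ v = σ w ↔ τ v = τ w)
  bb : ∀ v ∈ V, ∀ w ∈ V, ∀ R ∈ SB, (A.b R (σ v) (σ w) ↔ M.b R (τ v) (τ w))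

section
variable {A M : Str U B} {SU : Set U} {SB : Set B}

theorem PC.sub {Z : A.Dom → M.Dom → Prop} {V W : Set Var} {σ : Var → A.Dom} {τ : Var → M.Dom}
    (h : PC A M SU SB Z W σ τ) (hVW : V ⊆ W) : PC A M SU SB Z V σ τ :=
  ⟨fun v hv => h.z v (hVW hv), fun v hv w hw => h.eq v (hVW hv) w (hVW hw),
    fun v hv w hw => h.bb v (hVW hv) w (hVW hw)⟩

theorem PC.one {Z : A.Dom → M.Dom → Prop} {W : Set Var} {σ : Var → A.Dom} {τ : Var → M.Dom}
    {a : A.Dom} {m : M.Dom} (hz : Z a m) (hag : Ag1 A M SU SB a m)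
    (h : ∀ u ∈ W, σ u = a ∧ τ u = m) : PC A M SU SB Z W σ τ where
  z v hv := by rw [(h v hv).1, (h v hv).2]; exact hz
  eq v hv w hw := by rw [(h v hv).1, (h v hv).2, (h w hw).1, (h w hw).2]; simp
  bb v hv w hw R hR := by
    rw [(h v hv).1, (h v hv).2, (h w hw).1, (h w hw).2]; exact hag.2 R hR

theorem PC.two {Z : A.Dom → M.Dom → Prop} {W : Set Var} {σ : Var → A.Dom} {τ : Var → M.Dom}
    {a a' : A.Dom} {m m' : M.Dom} (hz : Z a m) (hz' : Z a' m') (ha : a' ≠ a) (hm : m' ≠ m)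
    (hag : Ag2 A M SU SB a a' m m') {v w : Var} (hvw : w ≠ v)
    (h1 : σ v = a') (h2 : σ w = a) (h3 : τ v = m') (h4 : τ w = m) :
    PC A M SU SB Z W σ τ := by
  have key : ∀ u, u = v ∨ u = w := by intro u; cases u <;> cases v <;> cases w <;> simp_all
  subst h1 h2 h3 h4
  constructor
  · intro u _
    rcases key u with rfl | rfl
    exacts [hz', hz]
  · intro u _ u' _
    rcases key u with rfl | rfl <;> rcases key u' with rfl | rfl <;> simp [ha, hm, ha.symm, hm.symm]
  · intro u _ u' _ R hR
    rcases key u with rfl | rfl <;> rcases key u' with rfl | rfl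
    exacts [hag.2.1.2 R hR, (hag.2.2 R hR).2, (hag.2.2 R hR).1, hag.1.2 R hR]

theorem upd_same {D : Type} (σ : Var → D) (v : Var) (d : D) : upd σ v d v = d := by simp [upd]
theorem upd_ne {D : Type} (σ : Var → D) {v w : Var} (h : w ≠ v) (d : D) : upd σ v d w = σ w := by
  simp [upd, h]

theorem Sys.step {Γ : Set (Fml U B)} {Z : ℕ → A.Dom → M.Dom → Prop} (S : Sys A M SU SB Γ Z)
    (k : ℕ) (W : Set Var) (v : Var)
    (qA : (Var → A.Dom) → Prop) (qM : (Var → M.Dom) → Prop)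
    (cM : ∀ τ τ', (∀ u ∈ W, τ u = τ' u) → qM τ → qM τ')
    (ih : ∀ σ τ, PC A M SU SB (Z k) W σ τ → (qA σ ↔ qM τ))
    (gA : ∀ w ∈ W, w ≠ v → ∀ σ, qA σ → σ v ≠ σ w → Guarded2 A SB (σ w) (σ v))
    (gM : ∀ w ∈ W, w ≠ v → ∀ τ, qM τ → τ v ≠ τ w → Guarded2 M SB (τ w) (τ v))
    (i1 : ∀ m m0, EqG M Γ (fun _ => m) (fun _ => m0) →
      ((∃ d, qM (upd (fun _ => m) v d)) ↔ ∃ d, qM (upd (fun _ => m0) v d)))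
    (i2 : ∀ τ τ', EqG M Γ τ τ' → (qM τ ↔ qM τ'))
    (σ : Var → A.Dom) (τ : Var → M.Dom) (h : PC A M SU SB (Z (k+1)) (W \ {v}) σ τ) :
    (∃ d, qA (upd σ v d)) ↔ ∃ d, qM (upd τ v d) := by
  by_cases hW : ∃ w ∈ W, w ≠ v
  · obtain ⟨w, hw, hwv⟩ := hW
    have key : ∀ u, u = v ∨ u = w := by intro u; cases u <;> cases v <;> cases w <;> simp_all
    have hz : Z (k+1) (σ w) (τ w) := h.z w ⟨hw, hwv⟩
    have hz' := S.mono hz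
    have cc : ∀ d, qM (upd (fun _ => τ w) v d) ↔ qM (upd τ v d) := by
      intro d
      have e : upd (fun _ => τ w) v d = upd τ v d := by
        funext u
        rcases key u with rfl | rfl
        · simp [upd]
        · simp [upd]
      rw [e]
    constructor
    · rintro ⟨d, hd⟩
      by_cases e : d = σ w
      · subst e
        refine ⟨τ w, (ih _ _ (PC.one hz' (S.ag hz) ?_)).1 hd⟩
        intro u _
        rcases key u with rfl | rfl <;> simp [upd]
      · have hg := gA w hw hwv _ hd (by simpa [upd, hwv] using e)
        rw [upd_same, upd_ne _ hwv] at hg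
        obtain ⟨m0, m', h1, h2, h3, h4, h5⟩ := S.forth hz d e hg
        have : qM (upd (fun _ => m0) v m') :=
          (ih _ _ (PC.two h3 h4 e h1 h2 hwv (upd_same _ _ _) (upd_ne _ hwv _) (upd_same _ _ _)
            (upd_ne _ hwv _))).1 hd
        obtain ⟨d', hd'⟩ := (i1 _ _ h5).2 ⟨_, this⟩
        exact ⟨d', (cc d').1 hd'⟩
    · rintro ⟨d, hd⟩
      obtain ⟨m0, h1, h2, h3⟩ := S.back hz
      obtain ⟨d', hd'⟩ := (i1 _ _ h2).1 ⟨d, (cc d).2 hd⟩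
      by_cases e : d' = m0
      · subst e
        refine ⟨σ w, (ih _ _ (PC.one h1 (S.ag h1) ?_)).2 hd'⟩
        intro u _
        rcases key u with rfl | rfl <;> simp [upd]
      · have hg := gM w hw hwv _ hd' (by simpa [upd, hwv] using e)
        rw [upd_same, upd_ne _ hwv] at hg
        obtain ⟨a', m0', h4, h5, h6, h7, h8⟩ := h3 d' e hg
        have : qM (upd (fun _ => m0) v m0') := (i2 _ _ (h8 v)).1 hd'
        exact ⟨a', (ih _ _ (PC.two h1 h7 h4 h5 h6 hwv (upd_same _ _ _) (upd_ne _ hwv _)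
          (upd_same _ _ _) (upd_ne _ hwv _))).2 this⟩
  · push Not at hW
    constructor
    · rintro ⟨d, hd⟩
      obtain ⟨m, hm⟩ := S.hl k d
      refine ⟨m, (ih _ _ (PC.one hm (S.ag hm) ?_)).1 hd⟩
      intro u hu; rw [hW u hu]; simp [upd]
    · rintro ⟨d, hd⟩
      obtain ⟨m, hm⟩ := S.hr k d
      refine ⟨m, (ih _ _ (PC.one hm (S.ag hm) ?_)).2 hd⟩
      intro u hu; rw [hW u hu]; simp [upd]

theorem PC.atom {Z : ℕ → A.Dom → M.Dom → Prop} {Γ : Set (Fml U B)} (S : Sys A M SU SB Γ Z) {k : ℕ}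
    {α : Fml U B} (hα : α.IsAtom) (hu : α.upreds ⊆ SU) (hb : α.bpreds ⊆ SB)
    {σ : Var → A.Dom} {τ : Var → M.Dom}
    (h : PC A M SU SB (Z k) α.free σ τ) : Sat A α σ ↔ Sat M α τ := by
  cases α with
  | uatom P v => exact (S.ag (h.z v rfl)).1 P (hu rfl)
  | batom R v w => exact h.bb v (Or.inl rfl) w (Or.inr rfl) R (hb rfl)
  | eqv v w => exact h.eq v (Or.inl rfl) w (Or.inr rfl)
  | _ => exact hα.elim

theorem atom_guard (A : Str U B) {SB : Set B} {α : Fml U B} (hα : α.IsAtom) (hb : α.bpreds ⊆ SB)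
    {v w : Var} (hv : v ∈ α.free) (hw : w ∈ α.free) (hwv : w ≠ v) {σ : Var → A.Dom}
    (h : Sat A α σ) (hne : σ v ≠ σ w) : Guarded2 A SB (σ w) (σ v) := by
  cases α with
  | uatom P u => 
    have h1 : v = u := hv
    have h2 : w = u := hw
    exact absurd (h2.trans h1.symm) hwv
  | batom R u u' =>
    refine ⟨R, hb rfl, ?_⟩
    rcases hv with rfl | hv
    · rcases hw with rfl | hw
      · exact absurd rfl hwv
      · cases hw; exact Or.inr h
    · cases hv
      rcases hw with rfl | hw
      · exact Or.inl h
      · cases hw; exact absurd rfl hwv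
  | eqv u u' =>
    have h : σ u = σ u' := h
    rcases hv with rfl | hv
    · rcases hw with rfl | hw
      · exact absurd rfl hwv
      · cases hw; exact absurd h hne
    · cases hv
      rcases hw with rfl | hw
      · exact absurd h.symm hne
      · cases hw; exact absurd rfl hwv
  | _ => exact hα.elim

theorem self_mem_subf (φ : Fml U B) : φ ∈ φ.Subf := by
  cases φ <;> simp [Fml.Subf]

theorem Sys.pres {Γ : Set (Fml U B)} {Z : ℕ → A.Dom → M.Dom → Prop} (S : Sys A M SU SB Γ Z)
    {ψ : Fml U B} (hψ : IsGF2 ψ) : ψ.Subf ⊆ Γ → ψ.upreds ⊆ SU → ψ.bpreds ⊆ SB →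
    ∀ k, ψ.gdepth ≤ k → ∀ σ τ, PC A M SU SB (Z k) ψ.free σ τ → (Sat A ψ σ ↔ Sat M ψ τ) := by
  induction hψ with
  | uatom P v => intro _ hu hb k _ σ τ h; exact PC.atom S (α := .uatom P v) trivial hu hb h
  | batom P v w => intro _ hu hb k _ σ τ h; exact PC.atom S (α := .batom P v w) trivial hu hb h
  | eqv v w => intro _ hu hb k _ σ τ h; exact PC.atom S (α := .eqv v w) trivial hu hb h
  | fls => intros; rfl
  | neg _ ih =>
    intro hG hu hb k hk σ τ h
    exact not_congr (ih (fun _ hx => hG (Or.inr hx)) hu hb k hk σ τ h)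
  | conj _ _ ih1 ih2 =>
    intro hG hu hb k hk σ τ h
    exact and_congr
      (ih1 (fun _ hx => hG (Or.inr (Or.inl hx))) (fun _ hx => hu (Or.inl hx))
        (fun _ hx => hb (Or.inl hx)) k (le_trans (le_max_left _ _) hk) σ τ (h.sub Set.subset_union_left))
      (ih2 (fun _ hx => hG (Or.inr (Or.inr hx))) (fun _ hx => hu (Or.inr hx))
        (fun _ hx => hb (Or.inr hx)) k (le_trans (le_max_right _ _) hk) σ τ (h.sub Set.subset_union_right))
  | disj _ _ ih1 ih2 =>
    intro hG hu hb k hk σ τ h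
    exact or_congr
      (ih1 (fun _ hx => hG (Or.inr (Or.inl hx))) (fun _ hx => hu (Or.inl hx))
        (fun _ hx => hb (Or.inl hx)) k (le_trans (le_max_left _ _) hk) σ τ (h.sub Set.subset_union_left))
      (ih2 (fun _ hx => hG (Or.inr (Or.inr hx))) (fun _ hx => hu (Or.inr hx))
        (fun _ hx => hb (Or.inr hx)) k (le_trans (le_max_right _ _) hk) σ τ (h.sub Set.subset_union_right))
  | impl _ _ ih1 ih2 =>
    intro hG hu hb k hk σ τ h
    exact imp_congr
      (ih1 (fun _ hx => hG (Or.inr (Or.inl hx))) (fun _ hx => hu (Or.inl hx))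
        (fun _ hx => hb (Or.inl hx)) k (le_trans (le_max_left _ _) hk) σ τ (h.sub Set.subset_union_left))
      (ih2 (fun _ hx => hG (Or.inr (Or.inr hx))) (fun _ hx => hu (Or.inr hx))
        (fun _ hx => hb (Or.inr hx)) k (le_trans (le_max_right _ _) hk) σ τ (h.sub Set.subset_union_right))
  | @allG v α φ hα _ hfr ih =>
    intro hG hu hb k hk σ τ h
    obtain ⟨k, rfl⟩ : ∃ j, k = j + 1 := ⟨k - 1, by simp only [Fml.gdepth] at hk; omega⟩
    have hk' : φ.gdepth ≤ k := by simp only [Fml.gdepth] at hk; omega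
    have hvf : v ∈ α.free := hfr (Or.inr rfl)
    have hφf : φ.free ⊆ α.free := fun _ hx => hfr (Or.inl hx)
    have hαφ : α.free ∪ φ.free = α.free := Set.union_eq_left.2 hφf
    have mall : Fml.all v (.impl α φ) ∈ Γ := hG (Or.inl rfl)
    have mα : α ∈ Γ := hG (Or.inr (Or.inr (Or.inl (self_mem_subf α))))
    have mφ : φ ∈ Γ := hG (Or.inr (Or.inr (Or.inr (self_mem_subf φ))))
    have hGφ : φ.Subf ⊆ Γ := fun _ hx => hG (Or.inr (Or.inr (Or.inr hx)))
    have huα : α.upreds ⊆ SU := fun _ hx => hu (Or.inl hx)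
    have hbα : α.bpreds ⊆ SB := fun _ hx => hb (Or.inl hx)
    have huφ : φ.upreds ⊆ SU := fun _ hx => hu (Or.inr hx)
    have hbφ : φ.bpreds ⊆ SB := fun _ hx => hb (Or.inr hx)
    have rw1 : ∀ (C : Str U B) (ρ : Var → C.Dom), Sat C (.all v (.impl α φ)) ρ ↔
        ¬ ∃ d, (Sat C α (upd ρ v d) ∧ ¬ Sat C φ (upd ρ v d)) := by
      intro C ρ; simp [Sat]
    rw [rw1, rw1]
    refine not_congr ?_
    refine S.step k α.free v (fun σ => Sat A α σ ∧ ¬ Sat A φ σ) (fun τ => Sat M α τ ∧ ¬ Sat M φ τ)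
      ?_ ?_ ?_ ?_ ?_ ?_ σ τ ?_
    · intro τ τ' hh
      rw [Sat_congr M α τ τ' hh, Sat_congr M φ τ τ' (fun u hu => hh u (hφf hu))]
      exact id
    · intro σ τ hh
      exact and_congr (PC.atom S hα huα hbα hh)
        (not_congr (ih hGφ huφ hbφ k hk' σ τ (hh.sub hφf)))
    · intro w hw hwv σ hs hne
      exact atom_guard A hα hbα hvf hw hwv hs.1 hne
    · intro w hw hwv σ hs hne
      exact atom_guard M hα hbα hvf hw hwv hs.1 hne
    · intro m m0 he
      have := he _ mall
      rw [rw1, rw1] at this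
      exact not_iff_not.1 this
    · intro τ τ' he
      exact and_congr (he _ mα) (not_congr (he _ mφ))
    · have : (Fml.all v (.impl α φ)).free = α.free \ {v} := by simp only [Fml.free]; rw [hαφ]
      rwa [this] at h
  | @exG v α φ hα _ hfr ih =>
    intro hG hu hb k hk σ τ h
    obtain ⟨k, rfl⟩ : ∃ j, k = j + 1 := ⟨k - 1, by simp only [Fml.gdepth] at hk; omega⟩
    have hk' : φ.gdepth ≤ k := by simp only [Fml.gdepth] at hk; omega
    have hvf : v ∈ α.free := hfr (Or.inr rfl)
    have hφf : φ.free ⊆ α.free := fun _ hx => hfr (Or.inl hx)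
    have hαφ : α.free ∪ φ.free = α.free := Set.union_eq_left.2 hφf
    have mall : Fml.ex v (.conj α φ) ∈ Γ := hG (Or.inl rfl)
    have mα : α ∈ Γ := hG (Or.inr (Or.inr (Or.inl (self_mem_subf α))))
    have mφ : φ ∈ Γ := hG (Or.inr (Or.inr (Or.inr (self_mem_subf φ))))
    have hGφ : φ.Subf ⊆ Γ := fun _ hx => hG (Or.inr (Or.inr (Or.inr hx)))
    have huα : α.upreds ⊆ SU := fun _ hx => hu (Or.inl hx)
    have hbα : α.bpreds ⊆ SB := fun _ hx => hb (Or.inl hx)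
    have huφ : φ.upreds ⊆ SU := fun _ hx => hu (Or.inr hx)
    have hbφ : φ.bpreds ⊆ SB := fun _ hx => hb (Or.inr hx)
    refine S.step k α.free v (fun σ => Sat A α σ ∧ Sat A φ σ) (fun τ => Sat M α τ ∧ Sat M φ τ)
      ?_ ?_ ?_ ?_ ?_ ?_ σ τ ?_
    · intro τ τ' hh
      rw [Sat_congr M α τ τ' hh, Sat_congr M φ τ τ' (fun u hu => hh u (hφf hu))]
      exact id
    · intro σ τ hh
      exact and_congr (PC.atom S hα huα hbα hh) (ih hGφ huφ hbφ k hk' σ τ (hh.sub hφf))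
    · intro w hw hwv σ hs hne
      exact atom_guard A hα hbα hvf hw hwv hs.1 hne
    · intro w hw hwv σ hs hne
      exact atom_guard M hα hbα hvf hw hwv hs.1 hne
    · intro m m0 he
      exact he _ mall
    · intro τ τ' he
      exact and_congr (he _ mα) (he _ mφ)
    · have : (Fml.ex v (.conj α φ)).free = α.free \ {v} := by simp only [Fml.free]; rw [hαφ]
      rwa [this] at h

theorem Sys.sent {Γ : Set (Fml U B)} {Z : ℕ → A.Dom → M.Dom → Prop} (S : Sys A M SU SB Γ Z)
    {ψ : Fml U B} (hψ : IsGF2 ψ) (hs : ψ.IsSentence) (hG : ψ.Subf ⊆ Γ) (hu : ψ.upreds ⊆ SU)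
    (hb : ψ.bpreds ⊆ SB) : SatS A ψ ↔ SatS M ψ := by
  obtain ⟨a⟩ := A.nonempty
  obtain ⟨m⟩ := M.nonempty
  rw [SatS_iff A hs (fun _ => a), SatS_iff M hs (fun _ => m)]
  refine S.pres hψ hG hu hb _ le_rfl _ _ ?_
  rw [hs]
  constructor <;> simp

end

end GFC

namespace GFC

variable {U B : Type}

section forest
variable (M : Str U B) (SB : Set B) {ι : Type} (ρ : M.Dom → M.Dom) (w : M.Dom → ι → M.Dom)

def vld (q : M.Dom) (i : ι) : Prop := w q i ≠ q ∧ Guarded2 M SB q (w q i)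

def stt (q : M.Dom) : List ι → M.Dom
  | [] => q
  | i :: l => ρ (w (stt q l) i)

def vlist (q : M.Dom) : List ι → Prop
  | [] => True
  | i :: l => vld M SB w (stt M ρ w q l) i ∧ vlist q l

abbrev nst (n : M.Dom × List ι) : M.Dom := stt M ρ w (ρ n.1) n.2

def npar (p c : M.Dom × List ι) : Prop :=
  ∃ i, c = (p.1, i :: p.2) ∧ vld M SB w (nst M ρ w p) i

theorem stt_append (q : M.Dom) (l l' : List ι) :
    stt M ρ w q (l' ++ l) = stt M ρ w (stt M ρ w q l) l' := by
  induction l' with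
  | nil => rfl
  | cons i l' ih => simp [stt, ih]

theorem npar_desc (n c : M.Dom × List ι) :
    Relation.ReflTransGen (npar M SB ρ w) n c ↔
      ∃ l', c = (n.1, l' ++ n.2) ∧ vlist M SB ρ w (nst M ρ w n) l' := by
  constructor
  · intro h
    induction h with
    | refl => exact ⟨[], rfl, trivial⟩
    | tail _ h ih =>
      obtain ⟨l', rfl, hv⟩ := ih
      obtain ⟨i, rfl, hi⟩ := h
      refine ⟨i :: l', rfl, ?_, hv⟩
      simpa [nst, stt_append] using hi
  · rintro ⟨l', rfl, hv⟩
    induction l' with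
    | nil => exact .refl
    | cons i l' ih =>
      refine .tail (ih hv.2) ⟨i, rfl, ?_⟩
      simpa [nst, stt_append] using hv.1

def fstr : Str U B where
  Dom := M.Dom × List ι
  nonempty := ⟨(Classical.choice M.nonempty, [])⟩
  u P n := M.u P (nst M ρ w n)
  b R c d := (c = d ∧ M.b R (nst M ρ w c) (nst M ρ w c)) ∨
    (∃ i, d = (c.1, i :: c.2) ∧ vld M SB w (nst M ρ w c) i ∧ M.b R (nst M ρ w c) (w (nst M ρ w c) i)) ∨
    (∃ i, c = (d.1, i :: d.2) ∧ vld M SB w (nst M ρ w d) i ∧ M.b R (w (nst M ρ w d) i) (nst M ρ w d))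

theorem npar_ne {n : M.Dom × List ι} {i : ι} : n ≠ (n.1, i :: n.2) := by
  intro h
  have := congrArg (fun x => x.2.length) h
  simp at this

theorem npar_ne2 {n : M.Dom × List ι} {i j : ι} : n ≠ (n.1, i :: j :: n.2) := by
  intro h
  have := congrArg (fun x => x.2.length) h
  simp at this
  omega

def fforest : Forest U B where
  toStr := fstr M SB ρ w
  parent := npar M SB ρ w
  parent_unique := by
    rintro c ⟨p1, p2⟩ ⟨q1, q2⟩ ⟨i, rfl, _⟩ ⟨j, h, _⟩
    simp only [Prod.mk.injEq, List.cons.injEq] at h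
    exact Prod.ext h.1 h.2.2
  parent_wf := by
    refine Subrelation.wf (r := InvImage (· < ·) (fun n : M.Dom × List ι => n.2.length)) ?_
      (InvImage.wf _ wellFounded_lt)
    rintro p c ⟨i, rfl, _⟩
    simp [InvImage]
  adj_iff := by
    intro a a'
    constructor
    · rintro ⟨hne, R, h | h⟩
      · rcases h with ⟨h, _⟩ | ⟨i, h, hv, _⟩ | ⟨i, h, hv, _⟩
        · exact absurd h hne
        · exact Or.inl ⟨i, h, hv⟩
        · exact Or.inr ⟨i, h, hv⟩
      · rcases h with ⟨h, _⟩ | ⟨i, h, hv, _⟩ | ⟨i, h, hv, _⟩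
        · exact absurd h.symm hne
        · exact Or.inr ⟨i, h, hv⟩
        · exact Or.inl ⟨i, h, hv⟩
    · rintro (⟨i, h, hv⟩ | ⟨i, h, hv⟩)
      · refine ⟨by rw [h]; exact npar_ne M, ?_⟩
        obtain ⟨R, _, hb | hb⟩ := hv.2
        · exact ⟨R, Or.inl (Or.inr (Or.inl ⟨i, h, hv, hb⟩))⟩
        · exact ⟨R, Or.inr (Or.inr (Or.inr ⟨i, h, hv, hb⟩))⟩
      · refine ⟨by rw [h]; exact (npar_ne M).symm, ?_⟩
        obtain ⟨R, _, hb | hb⟩ := hv.2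
        · exact ⟨R, Or.inr (Or.inr (Or.inl ⟨i, h, hv, hb⟩))⟩
        · exact ⟨R, Or.inl (Or.inr (Or.inr ⟨i, h, hv, hb⟩))⟩

theorem ffinite [Finite ι] : FiniteOutdeg (fforest M SB ρ w).toStr := by
  rintro ⟨r, l⟩
  refine Set.Finite.subset (s := Set.range (fun i : ι => ((r, i :: l) : M.Dom × List ι)) ∪ {(r, l.tail)})
    ((Set.finite_range _).union (Set.finite_singleton _)) ?_
  rintro a' ⟨hne, hb⟩
  rcases ((fforest M SB ρ w).adj_iff (r, l) a').1 ⟨hne.symm, hb⟩ with ⟨i, h, _⟩ | ⟨i, h, _⟩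
  · exact Or.inl ⟨i, h.symm⟩
  · right
    simp only [Prod.mk.injEq] at h
    rw [h.2, h.1]; rfl

theorem fb_append {n m : M.Dom × List ι} (h : nst M ρ w n = nst M ρ w m) (c d : List ι) (R : B) :
    (fstr M SB ρ w).b R (n.1, c ++ n.2) (n.1, d ++ n.2) →
    (fstr M SB ρ w).b R (m.1, c ++ m.2) (m.1, d ++ m.2) := by
  have e : ∀ l : List ι, nst M ρ w (n.1, l ++ n.2) = nst M ρ w (m.1, l ++ m.2) := by
    intro l; simp only [nst, stt_append]; simp only [nst] at h; rw [h]
  rintro (⟨h1, h2⟩ | ⟨i, h1, h2, h3⟩ | ⟨i, h1, h2, h3⟩)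
  · left
    simp only [Prod.mk.injEq, true_and, List.append_cancel_right_eq] at h1
    rw [e] at h2
    exact ⟨by rw [h1], h2⟩
  · right; left
    simp only [Prod.mk.injEq, true_and, ← List.cons_append, List.append_cancel_right_eq] at h1
    rw [e] at h2 h3
    exact ⟨i, by rw [h1]; rfl, h2, h3⟩
  · right; right
    simp only [Prod.mk.injEq, true_and, ← List.cons_append, List.append_cancel_right_eq] at h1
    rw [e] at h2 h3
    exact ⟨i, by rw [h1]; rfl, h2, h3⟩

theorem fp_append {n m : M.Dom × List ι} (h : nst M ρ w n = nst M ρ w m) (c d : List ι) :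
    npar M SB ρ w (n.1, c ++ n.2) (n.1, d ++ n.2) →
    npar M SB ρ w (m.1, c ++ m.2) (m.1, d ++ m.2) := by
  have e : ∀ l : List ι, nst M ρ w (n.1, l ++ n.2) = nst M ρ w (m.1, l ++ m.2) := by
    intro l; simp only [nst, stt_append]; simp only [nst] at h; rw [h]
  rintro ⟨i, h1, h2⟩
  simp only [Prod.mk.injEq, true_and, ← List.cons_append, List.append_cancel_right_eq] at h1
  rw [e] at h2
  exact ⟨i, by rw [h1]; rfl, h2⟩

theorem fiso {n m : M.Dom × List ι} (h : nst M ρ w n = nst M ρ w m) :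
    (fforest M SB ρ w).SubtreeIso n m := by
  have e : ∀ l : List ι, nst M ρ w (n.1, l ++ n.2) = nst M ρ w (m.1, l ++ m.2) := by
    intro l; simp only [nst, stt_append]; simp only [nst] at h; rw [h]
  let T : Type := {l : List ι // vlist M SB ρ w (nst M ρ w n) l}
  have mk : ∀ k : M.Dom × List ι, nst M ρ w n = nst M ρ w k →
      ∃ f : T ≃ (fforest M SB ρ w).desc k, ∀ t, (f t).val = (k.1, t.1 ++ k.2) := by
    intro k hk
    refine ⟨Equiv.ofBijective (fun t => ⟨(k.1, t.1 ++ k.2),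
      (npar_desc M SB ρ w k _).2 ⟨t.1, rfl, hk ▸ t.2⟩⟩) ⟨?_, ?_⟩, fun t => rfl⟩
    · intro t t' ht
      have := congrArg (fun x => x.val.2) ht
      exact Subtype.ext (List.append_cancel_right this)
    · rintro ⟨c, hc⟩
      obtain ⟨l', rfl, hv⟩ := (npar_desc M SB ρ w k _).1 hc
      exact ⟨⟨l', hk.symm ▸ hv⟩, rfl⟩
  obtain ⟨f, hf⟩ := mk n rfl
  obtain ⟨g, hg⟩ := mk m h
  have hc : ∀ c : (fforest M SB ρ w).desc n, ∃ t, f t = c := f.surjective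
  have hfg : ∀ t, (f.symm.trans g) (f t) = g t := by intro t; simp
  refine ⟨f.symm.trans g, ?_, ?_, ?_, ?_⟩
  · obtain ⟨t, ht⟩ := hc ⟨n, Relation.ReflTransGen.refl⟩
    rw [← ht, hfg, hg]
    have h1 : ((n.1, t.1 ++ n.2) : M.Dom × List ι) = n := by rw [← hf, ht]
    have h2 : t.1 = [] := by
      have := congrArg Prod.snd h1
      simpa using this
    rw [h2]; rfl
  · intro c d
    obtain ⟨t, rfl⟩ := hc c
    obtain ⟨s, rfl⟩ := hc d
    rw [hfg, hfg, hf, hf, hg, hg]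
    exact ⟨fp_append M SB ρ w h _ _, fp_append M SB ρ w h.symm _ _⟩
  · intro P c
    obtain ⟨t, rfl⟩ := hc c
    rw [hfg, hf, hg]
    change M.u P _ ↔ M.u P _
    rw [e]
  · intro R c d
    obtain ⟨t, rfl⟩ := hc c
    obtain ⟨s, rfl⟩ := hc d
    rw [hfg, hfg, hf, hf, hg, hg]
    exact ⟨fb_append M SB ρ w h _ _ R, fb_append M SB ρ w h.symm _ _ R⟩

theorem fregular (hfin : (Set.range ρ).Finite) (hid : ∀ m, ρ (ρ m) = ρ m) :
    (fforest M SB ρ w).Regular := by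
  refine ⟨(fun m => ((m, []) : M.Dom × List ι)) '' Set.range ρ, hfin.image _, ?_⟩
  intro n
  have hn : ∃ m, nst M ρ w n = ρ m := by
    obtain ⟨r, l⟩ := n
    cases l with
    | nil => exact ⟨r, rfl⟩
    | cons i l => exact ⟨_, rfl⟩
  obtain ⟨m, hm⟩ := hn
  refine ⟨_, ⟨ρ m, ⟨m, rfl⟩, rfl⟩, fiso M SB ρ w ?_⟩
  rw [hm]; exact hid m

end forest

theorem upred_sub {φ : Fml U B} {P : U} (h : P ∈ φ.upreds) : ∃ v, Fml.uatom P v ∈ φ.Subf := by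
  induction φ with
  | uatom Q v => cases h; exact ⟨v, rfl⟩
  | batom => exact h.elim
  | eqv => exact h.elim
  | fls => exact h.elim
  | neg φ ih => obtain ⟨v, hv⟩ := ih h; exact ⟨v, Or.inr hv⟩
  | all _ φ ih => obtain ⟨v, hv⟩ := ih h; exact ⟨v, Or.inr hv⟩
  | ex _ φ ih => obtain ⟨v, hv⟩ := ih h; exact ⟨v, Or.inr hv⟩
  | conj φ ψ ih1 ih2 =>
    rcases h with h | h
    · obtain ⟨v, hv⟩ := ih1 h; exact ⟨v, Or.inr (Or.inl hv)⟩
    · obtain ⟨v, hv⟩ := ih2 h; exact ⟨v, Or.inr (Or.inr hv)⟩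
  | disj φ ψ ih1 ih2 =>
    rcases h with h | h
    · obtain ⟨v, hv⟩ := ih1 h; exact ⟨v, Or.inr (Or.inl hv)⟩
    · obtain ⟨v, hv⟩ := ih2 h; exact ⟨v, Or.inr (Or.inr hv)⟩
  | impl φ ψ ih1 ih2 =>
    rcases h with h | h
    · obtain ⟨v, hv⟩ := ih1 h; exact ⟨v, Or.inr (Or.inl hv)⟩
    · obtain ⟨v, hv⟩ := ih2 h; exact ⟨v, Or.inr (Or.inr hv)⟩

theorem bpred_sub {φ : Fml U B} {R : B} (h : R ∈ φ.bpreds) :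
    ∃ v w, Fml.batom R v w ∈ φ.Subf := by
  induction φ with
  | batom Q v w => cases h; exact ⟨v, w, rfl⟩
  | uatom => exact h.elim
  | eqv => exact h.elim
  | fls => exact h.elim
  | neg φ ih => obtain ⟨v, w, hv⟩ := ih h; exact ⟨v, w, Or.inr hv⟩
  | all _ φ ih => obtain ⟨v, w, hv⟩ := ih h; exact ⟨v, w, Or.inr hv⟩
  | ex _ φ ih => obtain ⟨v, w, hv⟩ := ih h; exact ⟨v, w, Or.inr hv⟩
  | conj φ ψ ih1 ih2 =>
    rcases h with h | h
    · obtain ⟨v, w, hv⟩ := ih1 h; exact ⟨v, w, Or.inr (Or.inl hv)⟩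
    · obtain ⟨v, w, hv⟩ := ih2 h; exact ⟨v, w, Or.inr (Or.inr hv)⟩
  | disj φ ψ ih1 ih2 =>
    rcases h with h | h
    · obtain ⟨v, w, hv⟩ := ih1 h; exact ⟨v, w, Or.inr (Or.inl hv)⟩
    · obtain ⟨v, w, hv⟩ := ih2 h; exact ⟨v, w, Or.inr (Or.inr hv)⟩
  | impl φ ψ ih1 ih2 =>
    rcases h with h | h
    · obtain ⟨v, w, hv⟩ := ih1 h; exact ⟨v, w, Or.inr (Or.inl hv)⟩
    · obtain ⟨v, w, hv⟩ := ih2 h; exact ⟨v, w, Or.inr (Or.inr hv)⟩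

theorem subf_finite (φ : Fml U B) : φ.Subf.Finite := by
  induction φ with
  | uatom => exact Set.finite_singleton _
  | batom => exact Set.finite_singleton _
  | eqv => exact Set.finite_singleton _
  | fls => exact Set.finite_singleton _
  | neg φ ih => exact ih.insert _
  | all _ φ ih => exact ih.insert _
  | ex _ φ ih => exact ih.insert _
  | conj φ ψ ih1 ih2 => exact (ih1.union ih2).insert _
  | disj φ ψ ih1 ih2 => exact (ih1.union ih2).insert _
  | impl φ ψ ih1 ih2 => exact (ih1.union ih2).insert _

instance : Finite Var := Finite.of_injective (fun v : Var => match v with | .x => true | .y => false)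
  (by intro a b; cases a <;> cases b <;> simp)

theorem forest_model {χ : Fml U B} (hχ : IsGF2 χ) (hs : χ.IsSentence) {M : Str U B}
    (hM : SatS M χ) : ∃ F : Forest U B, SatS F.toStr χ ∧ F.Regular ∧ FiniteOutdeg F.toStr := by
  classical
  set Γ := χ.Subf with hΓ
  have : Finite Γ := (subf_finite χ).to_subtype
  set SU := χ.upreds with hSU
  set SB := χ.bpreds with hSB
  let t1 : M.Dom → Set Γ := fun m => {ψ | Sat M ψ.1 (fun _ => m)}
  let pick : Set Γ → M.Dom := fun t => if h : ∃ m, t1 m = t then h.choose else Classical.choice M.nonempty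
  have hpick : ∀ m, t1 (pick (t1 m)) = t1 m := by
    intro m
    have h : ∃ m', t1 m' = t1 m := ⟨m, rfl⟩
    simp only [pick, dif_pos h]
    exact h.choose_spec
  let ρ : M.Dom → M.Dom := fun m => pick (t1 m)
  have t1eq : ∀ m m', t1 m = t1 m' ↔ EqG M Γ (fun _ => m) (fun _ => m') := by
    intro m m'
    constructor
    · intro h ψ hψ
      exact Set.ext_iff.1 h ⟨ψ, hψ⟩
    · intro h
      ext ⟨ψ, hψ⟩
      exact h ψ hψ
  let t2 : M.Dom → M.Dom → (Var → Set Γ) := fun q m v => {ψ | Sat M ψ.1 (upd (fun _ => q) v m)}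
  let w : M.Dom → (Var → Set Γ) → M.Dom := fun q i =>
    if h : ∃ m, m ≠ q ∧ Guarded2 M SB q m ∧ t2 q m = i then h.choose else q
  have hw : ∀ q m, m ≠ q → Guarded2 M SB q m → w q (t2 q m) ≠ q ∧ Guarded2 M SB q (w q (t2 q m)) ∧
      t2 q (w q (t2 q m)) = t2 q m := by
    intro q m h1 h2
    have h : ∃ m', m' ≠ q ∧ Guarded2 M SB q m' ∧ t2 q m' = t2 q m := ⟨m, h1, h2, rfl⟩
    simp only [w, dif_pos h]
    exact h.choose_spec
  have ag1 : ∀ m m', EqG M Γ (fun _ => m) (fun _ => m') → Ag1 M M SU SB m m' := by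
    intro m m' h
    constructor
    · intro P hP
      obtain ⟨v, hv⟩ := upred_sub hP
      exact h _ hv
    · intro R hR
      obtain ⟨v, v', hv⟩ := bpred_sub hR
      exact h _ hv
  have hρ : ∀ m, EqG M Γ (fun _ => ρ m) (fun _ => m) := fun m => (t1eq _ _).1 (hpick m)
  let F := fforest M SB ρ w
  have fb1 : ∀ (n : F.Dom) R, F.b R n n ↔ M.b R (nst M ρ w n) (nst M ρ w n) := by
    intro n R
    constructor
    · rintro (h | ⟨i, h, _⟩ | ⟨i, h, _⟩)
      · exact h.2
      · exact absurd h (npar_ne M)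
      · exact absurd h (npar_ne M)
    · intro h; exact Or.inl ⟨rfl, h⟩
  have fb2 : ∀ (n : F.Dom) i, vld M SB w (nst M ρ w n) i → 
      Ag2 F.toStr M SU SB n (n.1, i :: n.2) (nst M ρ w n) (w (nst M ρ w n) i) := by
    intro n i hv
    have hq : nst M ρ w (n.1, i :: n.2) = ρ (w (nst M ρ w n) i) := rfl
    have hag := ag1 _ _ (hρ (w (nst M ρ w n) i))
    refine ⟨⟨fun P _ => Iff.rfl, fun R _ => fb1 n R⟩, ⟨?_, ?_⟩, ?_⟩
    · intro P hP
      exact hag.1 P hP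
    · intro R hR
      exact (fb1 (n.1, i :: n.2) R).trans (hag.2 R hR)
    · intro R hR
      constructor
      · constructor
        · rintro (⟨h, _⟩ | ⟨j, h, _, h'⟩ | ⟨j, h, _⟩)
          · exact absurd h (npar_ne M)
          · simp only [Prod.mk.injEq, List.cons.injEq, and_true, true_and] at h
            rw [h]; exact h'
          · exact absurd h (npar_ne2 M)
        · intro h; exact Or.inr (Or.inl ⟨i, rfl, hv, h⟩)
      · constructor
        · rintro (⟨h, _⟩ | ⟨j, h, _⟩ | ⟨j, h, _, h'⟩)
          · exact absurd h.symm (npar_ne M)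
          · exact absurd h (npar_ne2 M)
          · simp only [Prod.mk.injEq, List.cons.injEq, and_true, true_and] at h
            rw [h]; exact h'
        · intro h; exact Or.inr (Or.inr ⟨i, rfl, hv, h⟩)
  have S : Sys F.toStr M SU SB Γ (fun _ n m => EqG M Γ (fun _ => nst M ρ w n) (fun _ => m)) := by
    refine ⟨?_, fun h => h, ?_, ?_, ?_, ?_⟩
    · intro k a m h
      obtain ⟨h1, h2⟩ := ag1 _ _ h
      exact ⟨h1, fun R hR => (fb1 a R).trans (h2 R hR)⟩
    · intro _ n; exact ⟨nst M ρ w n, fun _ _ => Iff.rfl⟩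
    · intro _ m; exact ⟨(m, []), hρ m⟩
    · intro _ n m h n' hne hg
      obtain ⟨R, _, hR⟩ := hg
      rcases (F.adj_iff n n').1 ⟨hne.symm, R, hR⟩ with ⟨i, rfl, hv⟩ | ⟨i, rfl, hv⟩
      · exact ⟨_, _, hv.1, fb2 n i hv, fun _ _ => Iff.rfl, hρ _, fun ψ hψ => (h ψ hψ).symm⟩
      · refine ⟨_, _, hv.1.symm, (fb2 n' i hv).swap, hρ _, fun _ _ => Iff.rfl, fun ψ hψ => ?_⟩
        exact (h ψ hψ).symm.trans (hρ _ ψ hψ)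
    · intro _ n m h
      refine ⟨nst M ρ w n, fun _ _ => Iff.rfl, fun ψ hψ => (h ψ hψ).symm, ?_⟩
      intro m' hne hg
      obtain ⟨h1, h2, h3⟩ := hw _ m' hne hg
      refine ⟨(n.1, t2 (nst M ρ w n) m' :: n.2), _, (npar_ne M).symm, h1, fb2 n _ ⟨h1, h2⟩, hρ _, ?_⟩
      intro v ψ hψ
      have := Set.ext_iff.1 (congrFun h3 v) ⟨ψ, hψ⟩
      exact this.symm
  refine ⟨F, (S.sent hχ hs le_rfl le_rfl le_rfl).2 hM, ?_, ffinite M SB ρ w⟩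
  refine fregular M SB ρ w ?_ ?_
  · refine (Set.finite_range pick).subset ?_
    rintro _ ⟨m, rfl⟩
    exact ⟨_, rfl⟩
  · intro m
    simp only [ρ]
    rw [hpick]

end GFC

namespace GFC

variable {U B : Type}

def Itr {D : Type} (r : D → D → Prop) : ℕ → D → D → Prop
  | 0, a, c => a = c
  | n+1, a, c => ∃ d, Itr r n a d ∧ r d c

theorem Itr.trans {D : Type} {r : D → D → Prop} {n m : ℕ} {a b c : D}
    (h : Itr r n a b) (h' : Itr r m b c) : Itr r (n + m) a c := by
  induction m generalizing c with
  | zero => cases h'; exact h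
  | succ m ih => obtain ⟨d, h1, h2⟩ := h'; exact ⟨d, ih h1, h2⟩

theorem Itr.of_transGen {D : Type} {r : D → D → Prop} {a c : D}
    (h : Relation.TransGen r a c) : ∃ n, 0 < n ∧ Itr r n a c := by
  induction h with
  | single h => exact ⟨1, one_pos, _, rfl, h⟩
  | tail _ h ih => obtain ⟨n, _, hn⟩ := ih; exact ⟨n+1, Nat.succ_pos _, _, hn, h⟩

theorem Itr.transGen {D : Type} {r : D → D → Prop} {n : ℕ} {a c : D}
    (h : Itr r (n+1) a c) : Relation.TransGen r a c := by
  induction n generalizing c with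
  | zero => obtain ⟨d, h1, h2⟩ := h; cases h1; exact .single h2
  | succ n ih => obtain ⟨d, h1, h2⟩ := h; exact .tail (ih h1) h2

theorem Itr.head {D : Type} {r : D → D → Prop} {n : ℕ} {a c : D}
    (h : Itr r (n+1) a c) : ∃ d, r a d ∧ Itr r n d c := by
  induction n generalizing c with
  | zero => obtain ⟨d, h1, h2⟩ := h; cases h1; exact ⟨c, h2, rfl⟩
  | succ n ih =>
    obtain ⟨d, h1, h2⟩ := h
    obtain ⟨e, h3, h4⟩ := ih h1
    exact ⟨e, h3, d, h4, h2⟩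

theorem Bisim.ks {A M : Str U B} {SU : Set U} {SB : Set B} {a : A.Dom} {b : M.Dom}
    (h : Bisim A M SU SB a b) (k : ℕ) : KS A M SU SB (fun _ => False) k a b := by
  obtain ⟨Z, hZ, hab⟩ := h
  induction k generalizing a b with
  | zero => exact (atp1_iff _ _ _ _ _ _).1 (hZ.atom_eq hab)
  | succ k ih =>
    refine ⟨(atp1_iff _ _ _ _ _ _).1 (hZ.atom_eq hab), fun _ => ⟨?_, ?_⟩⟩
    · intro a' h1 h2
      obtain ⟨b', h3, h4, h5⟩ := hZ.forth hab a' h1 h2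
      exact ⟨b', h3, (atp2_iff _ _ _ _ _ _ _ _).1 h4, ih h5⟩
    · intro a' h1 h2
      obtain ⟨b', h3, h4, h5⟩ := hZ.back hab a' h1 h2
      exact ⟨b', h3, (atp2_iff _ _ _ _ _ _ _ _).1 h4, ih h5⟩

theorem wf_transGen_irrefl {D : Type} {r : D → D → Prop} (h : WellFounded r) (a : D) :
    ¬ Relation.TransGen r a a := by
  intro ha
  have := h.transGen
  exact (this.isIrrefl).irrefl a ha

theorem ptdelim_ks {F : Forest U B} {M : Str U B} {SU : Set U} {SB : Set B} {abot : F.Dom}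
    {Z : F.Dom → M.Dom → Prop} (hZ : IsPtDelimBisim F.toStr M SU SB abot Z) (k : ℕ) :
    ∀ {a : F.Dom} {b : M.Dom} {m : ℕ}, Z a b → k < m → Itr F.parent m abot a →
      KS F.toStr M SU SB (fun _ => False) k a b := by
  induction k with
  | zero => intro a b m hab _ _; exact (atp1_iff _ _ _ _ _ _).1 (hZ.atom_eq hab)
  | succ k ih =>
    intro a b m hab hm hi
    obtain ⟨m, rfl⟩ : ∃ j, m = j + 1 := ⟨m - 1, by omega⟩
    have hne : a ≠ abot := by
      rintro rfl
      exact wf_transGen_irrefl F.parent_wf _ hi.transGen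
    have key : ∀ a', a' ≠ a → Guarded2 F.toStr SB a a' → ∃ m', k < m' ∧ Itr F.parent m' abot a' := by
      rintro a' hn ⟨R, _, hR⟩
      rcases (F.adj_iff a a').1 ⟨hn.symm, R, hR⟩ with h | h
      · exact ⟨m+1+1, by omega, a, hi, h⟩
      · obtain ⟨d, h1, h2⟩ := hi
        cases F.parent_unique h h2
        exact ⟨m, by omega, h1⟩
    refine ⟨(atp1_iff _ _ _ _ _ _).1 (hZ.atom_eq hab), fun _ => ⟨?_, ?_⟩⟩
    · intro a' h1 h2
      obtain ⟨b', h3, h4, h5⟩ := hZ.forth hab hne a' h1 h2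
      obtain ⟨m', h6, h7⟩ := key a' h1 h2
      exact ⟨b', h3, (atp2_iff _ _ _ _ _ _ _ _).1 h4, ih h5 h6 h7⟩
    · intro b' h1 h2
      obtain ⟨a', h3, h4, h5⟩ := hZ.back hab hne b' h1 h2
      have h4' := (atp2_iff _ _ _ _ _ _ _ _).1 h4
      obtain ⟨m', h6, h7⟩ := key a' h3 (h4'.guarded.2 h2)
      exact ⟨a', h3, h4', ih h5 h6 h7⟩

theorem sys_ks {A M : Str U B} {SU : Set U} {SB : Set B}
    (hl : ∀ k a, ∃ m, KS A M SU SB (fun _ => False) k a m)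
    (hr : ∀ k m, ∃ a, KS A M SU SB (fun _ => False) k a m) :
    Sys A M SU SB Set.univ (KS A M SU SB (fun _ => False)) where
  ag h := h.ag
  mono h := h.succ
  hl := hl
  hr := hr
  forth := by
    intro k a m h a' h1 h2
    obtain ⟨b', h3, h4, h5⟩ := (h.2 id).1 a' h1 h2
    exact ⟨m, b', h3, h4, h.succ, h5, fun _ _ => Iff.rfl⟩
  back := by
    intro k a m h
    refine ⟨m, h.succ, fun _ _ => Iff.rfl, ?_⟩
    intro m' h1 h2
    obtain ⟨a', h3, h4, h5⟩ := (h.2 id).2 m' h1 h2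
    exact ⟨a', m', h3, h1, h4, h5, fun _ _ _ => Iff.rfl⟩

theorem dir_back {φ₁ φ₂ : Fml U B} {SU : Set U} {SB : Set B}
    (h1 : IsGF2 φ₁) (h1s : φ₁.IsSentence)
    (H : ∀ F : Forest U B, SatS F.toStr φ₁ → F.Regular → FiniteOutdeg F.toStr →
      ∃ Bm : Str U B, SatS Bm φ₂ ∧
        (∀ a, ∃ b, Bisim F.toStr Bm SU SB a b) ∧
        (∀ b : Bm.Dom,
          (∃ a, Bisim F.toStr Bm SU SB a b) ∨
          (∃ (abot : F.Dom) (as as' : ℕ → F.Dom),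
            F.prec SB abot (as 0) ∧
            (∀ i, F.prec SB (as i) (as (i+1))) ∧
            (∀ i, F.prec SB (as i) (as' i)) ∧
            (∀ i, PtDelimBisim F.toStr Bm SU SB abot (as' i) b)))) :
    GF2Entails SU SB φ₁ φ₂ := by
  intro ψ hψ h2 A hA
  by_contra hn
  have hcs : (Fml.conj φ₁ (.neg ψ)).IsSentence := by
    have e1 : φ₁.free = ∅ := h1s
    have e2 : ψ.free = ∅ := hψ.2.1
    simp [Fml.IsSentence, Fml.free, e1, e2]
  have hc : SatS A (.conj φ₁ (.neg ψ)) := fun σ => ⟨hA σ, (satS_neg A hψ.2.1).2 hn σ⟩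
  obtain ⟨F, hF, hreg, hfin⟩ := forest_model (.conj h1 (.neg hψ.1)) hcs hc
  have hF1 : SatS F.toStr φ₁ := fun σ => (hF σ).1
  have hF2 : ¬ SatS F.toStr ψ := (satS_neg _ hψ.2.1).1 fun σ => (hF σ).2
  obtain ⟨M, hM, c1, c2⟩ := H F hF1 hreg hfin
  have S : Sys F.toStr M SU SB Set.univ (KS F.toStr M SU SB (fun _ => False)) := by
    refine sys_ks ?_ ?_
    · intro k a
      obtain ⟨b, hb⟩ := c1 a
      exact ⟨b, hb.ks k⟩
    · intro k b
      rcases c2 b with ⟨a, ha⟩ | ⟨abot, as, as', p0, p1, p2, p3⟩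
      · exact ⟨a, ha.ks k⟩
      · have hh : ∀ i, ∃ m, i < m ∧ Itr F.parent m abot (as i) := by
          intro i
          induction i with
          | zero => exact Itr.of_transGen p0.2
          | succ i ih =>
            obtain ⟨m, hm, hi⟩ := ih
            obtain ⟨m', hm', hi'⟩ := Itr.of_transGen (p1 i).2
            exact ⟨m + m', by omega, hi.trans hi'⟩
        obtain ⟨m, hm, hi⟩ := hh k
        obtain ⟨m', hm', hi'⟩ := Itr.of_transGen (p2 k).2
        obtain ⟨Z, hZ, hz⟩ := p3 k
        exact ⟨as' k, ptdelim_ks hZ k hz (by omega) (hi.trans hi')⟩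
  exact hF2 ((S.sent hψ.1 hψ.2.1 (Set.subset_univ _) hψ.2.2.1 hψ.2.2.2).2 (h2 M hM))

/-! characteristic formulas -/

structure Good (SU : Set U) (SB : Set B) (V : Set Var) (φ : Fml U B) : Prop where
  gf : IsGF2 φ
  fr : φ.free ⊆ V
  up : φ.upreds ⊆ SU
  bp : φ.bpreds ⊆ SB

theorem lit_exists {SU : Set U} {SB : Set B} {V : Set Var} {Φ : Set (Fml U B)} (hΦ : Φ.Finite)
    (S : Set (Fml U B)) : (∀ φ ∈ Φ, Good SU SB V φ) →
    ∃ χ, Good SU SB V χ ∧ ∀ (A : Str U B) (σ : Var → A.Dom),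
      Sat A χ σ ↔ ∀ φ ∈ Φ, (Sat A φ σ ↔ φ ∈ S) := by
  induction Φ, hΦ using Set.Finite.induction_on with
  | empty =>
    intro _
    exact ⟨.neg .fls, ⟨.neg .fls, by simp [Fml.free], by simp [Fml.upreds], by simp [Fml.bpreds]⟩,
      by simp [Sat]⟩
  | @insert φ Φ _ _ ih =>
    intro h
    obtain ⟨χ, hχ, hs⟩ := ih (fun ψ hψ => h ψ (Or.inr hψ))
    have hφ := h φ (Or.inl rfl)
    by_cases hS : φ ∈ S
    · refine ⟨.conj φ χ, ⟨.conj hφ.gf hχ.gf, Set.union_subset hφ.fr hχ.fr,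
        Set.union_subset hφ.up hχ.up, Set.union_subset hφ.bp hχ.bp⟩, fun A σ => ?_⟩
      simp [Sat, hs, hS]
    · refine ⟨.conj (.neg φ) χ, ⟨.conj (.neg hφ.gf) hχ.gf, Set.union_subset hφ.fr hχ.fr,
        Set.union_subset hφ.up hχ.up, Set.union_subset hφ.bp hχ.bp⟩, fun A σ => ?_⟩
      simp [Sat, hs, hS]

def Atoms (SU : Set U) (SB : Set B) : Set (Fml U B) :=
  {f | f.IsAtom ∧ f.upreds ⊆ SU ∧ f.bpreds ⊆ SB}

theorem atoms_finite {SU : Set U} {SB : Set B} (hSU : SU.Finite) (hSB : SB.Finite) :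
    (Atoms SU SB).Finite := by
  have : Atoms SU SB ⊆ (⋃ v : Var, (fun P => Fml.uatom P v) '' SU) ∪
      (⋃ v : Var, ⋃ w : Var, (fun R => Fml.batom R v w) '' SB) ∪
      (⋃ v : Var, ⋃ w : Var, {Fml.eqv v w}) := by
    rintro f ⟨h1, h2, h3⟩
    cases f with
    | uatom P v => left; left; simp only [Set.mem_iUnion]; exact ⟨v, P, h2 rfl, rfl⟩
    | batom R v w => left; right; simp only [Set.mem_iUnion]; exact ⟨v, w, R, h3 rfl, rfl⟩
    | eqv v w => right; simp only [Set.mem_iUnion]; exact ⟨v, w, rfl⟩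
    | _ => exact h1.elim
  refine Set.Finite.subset ?_ this
  refine (Set.Finite.union ?_ ?_).union ?_
  · exact Set.finite_iUnion fun v => hSU.image _
  · exact Set.finite_iUnion fun v => Set.finite_iUnion fun w => hSB.image _
  · exact Set.finite_iUnion fun v => Set.finite_iUnion fun w => Set.finite_singleton _

theorem Atoms.good {SU : Set U} {SB : Set B} {f : Fml U B} (h : f ∈ Atoms SU SB) :
    Good SU SB Set.univ f := by
  refine ⟨?_, Set.subset_univ _, h.2.1, h.2.2⟩
  cases f with
  | uatom P v => exact .uatom P v
  | batom R v w => exact .batom R v w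
  | eqv v w => exact .eqv v w
  | _ => exact h.1.elim

theorem ag1_of_atoms {SU : Set U} {SB : Set B} {A M : Str U B} {σ : Var → A.Dom} {τ : Var → M.Dom}
    (v : Var) (h : ∀ f ∈ Atoms SU SB, f.free ⊆ {v} → (Sat A f σ ↔ Sat M f τ)) :
    Ag1 A M SU SB (σ v) (τ v) := by
  constructor
  · intro P hP
    exact h (.uatom P v) ⟨trivial, by simpa [Fml.upreds], by simp [Fml.bpreds]⟩ (by simp [Fml.free])
  · intro R hR
    exact h (.batom R v v) ⟨trivial, by simp [Fml.upreds], by simpa [Fml.bpreds]⟩ (by simp [Fml.free])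

def oth : Var → Var
  | .x => .y
  | .y => .x

theorem oth_ne (v : Var) : oth v ≠ v := by cases v <;> simp [oth]

theorem phi_exists {SU : Set U} {SB : Set B} (hSU : SU.Finite) (hSB : SB.Finite) (k : ℕ) :
    ∀ v : Var, ∃ Φ : Set (Fml U B), Φ.Finite ∧ (∀ φ ∈ Φ, Good SU SB {v} φ) ∧
      ∀ (A M : Str U B) (a : A.Dom) (m : M.Dom),
        (∀ φ ∈ Φ, (Sat A φ (fun _ => a) ↔ Sat M φ (fun _ => m))) →
        KS A M SU SB (fun _ => False) k a m := by
  induction k with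
  | zero =>
    intro v
    refine ⟨{f | f ∈ Atoms SU SB ∧ f.free ⊆ {v}}, (atoms_finite hSU hSB).subset (fun _ h => h.1), ?_, ?_⟩
    · rintro φ ⟨h1, h2⟩
      have := Atoms.good h1
      exact ⟨this.gf, h2, this.up, this.bp⟩
    · intro A M a m h
      exact ag1_of_atoms (σ := fun _ => a) (τ := fun _ => m) v (fun f h1 h2 => h f ⟨h1, h2⟩)
  | succ k ih =>
    intro v
    set w := oth v with hw
    have hwv : w ≠ v := oth_ne v
    obtain ⟨Φ, hΦ, hΦg, hΦk⟩ := ih w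
    let Ψ := Atoms SU SB ∪ Φ
    have hΨ : Ψ.Finite := (atoms_finite hSU hSB).union hΦ
    have hΨg : ∀ φ ∈ Ψ, Good SU SB Set.univ φ := by
      rintro φ (h | h)
      · exact Atoms.good h
      · exact ⟨(hΦg φ h).gf, Set.subset_univ _, (hΦg φ h).up, (hΦg φ h).bp⟩
    have hlit := fun S => lit_exists hΨ S hΨg
    choose lit hlg hls using hlit
    let Gd : Set (Fml U B) := (fun R => Fml.batom R v w) '' SB ∪ (fun R => Fml.batom R w v) '' SB
    have hGd : Gd.Finite := (hSB.image _).union (hSB.image _)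
    let E : Fml U B → Set (Fml U B) → Fml U B := fun g S => .ex w (.conj g (lit S))
    have key2 : ∀ u, u = v ∨ u = w := by intro u; rw [hw]; cases u <;> cases v <;> simp [oth]
    have hEg : ∀ g ∈ Gd, ∀ S, Good SU SB {v} (E g S) := by
      intro g hg S
      have hga : g.IsAtom ∧ g.free = Set.univ ∧ g.upreds = ∅ ∧ g.bpreds ⊆ SB := by
        rcases hg with ⟨R, hR, rfl⟩ | ⟨R, hR, rfl⟩
        · refine ⟨trivial, ?_, rfl, by simpa [Fml.bpreds]⟩
          ext u; simpa [Fml.free] using key2 u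
        · refine ⟨trivial, ?_, rfl, by simpa [Fml.bpreds]⟩
          ext u; simpa [Fml.free] using (key2 u).symm
      refine ⟨.exG hga.1 (hlg S).gf (by rw [hga.2.1]; exact Set.subset_univ _), ?_, ?_, ?_⟩
      · rintro u ⟨_, hu⟩
        exact (key2 u).resolve_right hu
      · refine Set.union_subset (by rw [hga.2.2.1]; exact Set.empty_subset _) (hlg S).up
      · exact Set.union_subset hga.2.2.2 (hlg S).bp
    refine ⟨{f | f ∈ Atoms SU SB ∧ f.free ⊆ {v}} ∪ Set.image2 E Gd (𝒫 Ψ),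
      ((atoms_finite hSU hSB).subset (fun _ h => h.1)).union
        (Set.Finite.image2 E hGd hΨ.finite_subsets), ?_, ?_⟩
    · rintro φ (⟨h1, h2⟩ | ⟨g, hg, S, hS, rfl⟩)
      · have := Atoms.good h1
        exact ⟨this.gf, h2, this.up, this.bp⟩
      · exact hEg g hg S
    · have claim : ∀ (A M : Str U B) (a : A.Dom) (m : M.Dom),
          (∀ φ ∈ Set.image2 E Gd (𝒫 Ψ), (Sat A φ (fun _ => a) ↔ Sat M φ (fun _ => m))) →
          ∀ a', a' ≠ a → Guarded2 A SB a a' → ∃ m', m' ≠ m ∧ Ag2 A M SU SB a a' m m' ∧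
            ∀ φ ∈ Φ, (Sat A φ (fun _ => a') ↔ Sat M φ (fun _ => m')) := by
        intro A M a m h a' hne hg
        let σ := upd (fun _ => a) w a'
        have σv : σ v = a := upd_ne _ hwv.symm _
        have σw : σ w = a' := upd_same _ _ _
        obtain ⟨g, hg, hgs⟩ : ∃ g ∈ Gd, Sat A g σ := by
          obtain ⟨R, hR, hb | hb⟩ := hg
          · refine ⟨.batom R v w, Or.inl ⟨R, hR, rfl⟩, ?_⟩
            change A.b R (σ v) (σ w)
            rw [σv, σw]; exact hb
          · refine ⟨.batom R w v, Or.inr ⟨R, hR, rfl⟩, ?_⟩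
            change A.b R (σ w) (σ v)
            rw [σv, σw]; exact hb
        let S : Set (Fml U B) := {ψ | ψ ∈ Ψ ∧ Sat A ψ σ}
        have hS : S ⊆ Ψ := fun _ h => h.1
        have hA : Sat A (E g S) (fun _ => a) := by
          refine ⟨a', hgs, (hls S A σ).2 ?_⟩
          intro φ hφ
          exact ⟨fun h => ⟨hφ, h⟩, fun h => h.2⟩
        obtain ⟨m', hm1, hm2⟩ := (h _ ⟨g, hg, S, hS, rfl⟩).1 hA
        let τ := upd (fun _ => m) w m'
        have τv : τ v = m := upd_ne _ hwv.symm _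
        have τw : τ w = m' := upd_same _ _ _
        have agree : ∀ φ ∈ Ψ, (Sat A φ σ ↔ Sat M φ τ) := by
          intro φ hφ
          rw [((hls S M τ).1 hm2 φ hφ)]
          exact ⟨fun h => ⟨hφ, h⟩, fun h => h.2⟩
        have aga : ∀ f ∈ Atoms SU SB, (Sat A f σ ↔ Sat M f τ) := fun f hf => agree f (Or.inl hf)
        refine ⟨m', ?_, ⟨?_, ?_, ?_⟩, ?_⟩
        · intro e
          have := aga (.eqv w v) ⟨trivial, by simp [Fml.upreds], by simp [Fml.bpreds]⟩
          have h2 : σ w = σ v := this.2 (by change τ w = τ v; rw [τv, τw, e])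
          rw [σv, σw] at h2
          exact hne h2
        · have := ag1_of_atoms v (fun f h1 _ => aga f h1)
          rwa [σv, τv] at this
        · have := ag1_of_atoms w (fun f h1 _ => aga f h1)
          rwa [σw, τw] at this
        · intro R hR
          have h1 : A.b R (σ v) (σ w) ↔ M.b R (τ v) (τ w) :=
            aga (.batom R v w) ⟨trivial, by simp [Fml.upreds], by simpa [Fml.bpreds]⟩
          have h2 : A.b R (σ w) (σ v) ↔ M.b R (τ w) (τ v) :=
            aga (.batom R w v) ⟨trivial, by simp [Fml.upreds], by simpa [Fml.bpreds]⟩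
          rw [σv, σw, τv, τw] at h1 h2
          exact ⟨h1, h2⟩
        · intro φ hφ
          have h1 := agree φ (Or.inr hφ)
          rw [Sat_congr A φ σ (fun _ => a'), Sat_congr M φ τ (fun _ => m')] at h1
          · exact h1
          · intro u hu
            rw [(hΦg φ hφ).fr hu, τw]
          · intro u hu
            rw [(hΦg φ hφ).fr hu, σw]
      intro A M a m h
      refine ⟨ag1_of_atoms (σ := fun _ => a) (τ := fun _ => m) v
        (fun f h1 h2 => h f (Or.inl ⟨h1, h2⟩)), fun _ => ⟨?_, ?_⟩⟩
      · intro a' h1 h2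
        obtain ⟨m', h3, h4, h5⟩ := claim A M a m (fun φ hφ => h φ (Or.inr hφ)) a' h1 h2
        exact ⟨m', h3, h4, hΦk A M a' m' h5⟩
      · intro m' h1 h2
        obtain ⟨a', h3, h4, h5⟩ := claim M A m a (fun φ hφ => (h φ (Or.inr hφ)).symm) m' h1 h2
        refine ⟨a', h3, ?_, hΦk A M a' m' (fun φ hφ => (h5 φ hφ).symm)⟩
        exact ⟨⟨fun P hP => (h4.1.1 P hP).symm, fun P hP => (h4.1.2 P hP).symm⟩,
          ⟨fun P hP => (h4.2.1.1 P hP).symm, fun P hP => (h4.2.1.2 P hP).symm⟩,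
          fun R hR => ⟨(h4.2.2 R hR).1.symm, (h4.2.2 R hR).2.symm⟩⟩

theorem global_char {SU : Set U} {SB : Set B} (hSU : SU.Finite) (hSB : SB.Finite) (k : ℕ)
    (A : Str U B) : ∃ χ, IsGF2Sentence SU SB χ ∧ SatS A χ ∧ ∀ M : Str U B, SatS M χ →
      (∀ a, ∃ m, KS A M SU SB (fun _ => False) k a m) ∧
      (∀ m, ∃ a, KS A M SU SB (fun _ => False) k a m) := by
  obtain ⟨Φ, hΦ, hΦg, hΦk⟩ := phi_exists (U := U) (B := B) hSU hSB k .x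
  have hlit := fun S => lit_exists hΦ S hΦg
  choose lit hlg hls using hlit
  let E : Set (Fml U B) → Fml U B := fun S => .ex .x (.conj (.eqv .x .x) (lit S))
  have hEs : ∀ (M : Str U B) S σ, Sat M (E S) σ ↔ ∃ m : M.Dom, ∀ φ ∈ Φ, (Sat M φ (fun _ => m) ↔ φ ∈ S) := by
    intro M S σ
    have : Sat M (E S) σ ↔ ∃ d, Sat M (lit S) (upd σ .x d) := by simp [E, Sat]
    rw [this]
    refine exists_congr fun d => ?_
    rw [← hls S M (fun _ => d)]
    refine Sat_congr _ _ _ _ ?_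
    intro u hu
    rw [(hlg S).fr hu]; simp [upd]
  have hEg : ∀ S, Good SU SB ∅ (E S) := by
    intro S
    refine ⟨.exG trivial (hlg S).gf ?_, ?_, ?_, ?_⟩
    · rintro u (hu | hu)
      · exact Or.inl ((hlg S).fr hu)
      · exact Or.inl hu
    · rintro u ⟨hu | hu, h2⟩
      · rcases hu with hu | hu <;> exact h2 hu
      · exact h2 ((hlg S).fr hu)
    · exact Set.union_subset (Set.empty_subset _) (hlg S).up
    · exact Set.union_subset (Set.empty_subset _) (hlg S).bp
  obtain ⟨χ, hχ, hχs⟩ := lit_exists (SU := SU) (SB := SB) (V := ∅) (Φ := E '' (𝒫 Φ)) (hΦ.finite_subsets.image _)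
    {θ | SatS A θ} (by rintro _ ⟨S, _, rfl⟩; exact hEg S)
  have sent : ∀ S, (E S).IsSentence := fun S => Set.subset_empty_iff.1 (hEg S).fr
  refine ⟨χ, ⟨hχ.gf, Set.subset_empty_iff.1 hχ.fr, hχ.up, hχ.bp⟩, ?_, ?_⟩
  · intro σ
    rw [hχs]
    rintro _ ⟨S, _, rfl⟩
    exact (SatS_iff A (sent S) σ).symm
  · intro M hM
    obtain ⟨m0⟩ := M.nonempty
    obtain ⟨a0⟩ := A.nonempty
    have h : ∀ S ⊆ Φ, (Sat M (E S) (fun _ => m0) ↔ Sat A (E S) (fun _ => a0)) := by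
      intro S hS
      rw [(hχs M (fun _ => m0)).1 (hM _) _ ⟨S, hS, rfl⟩]
      exact SatS_iff A (sent S) _
    constructor
    · intro a
      let S := {φ | φ ∈ Φ ∧ Sat A φ (fun _ => a)}
      have := (h S (fun _ h => h.1)).2 ((hEs A S _).2 ⟨a, fun φ hφ => ⟨fun h => ⟨hφ, h⟩, fun h => h.2⟩⟩)
      obtain ⟨m, hm⟩ := (hEs M S _).1 this
      refine ⟨m, hΦk _ _ _ _ fun φ hφ => ?_⟩
      rw [hm φ hφ]
      exact ⟨fun h => ⟨hφ, h⟩, fun h => h.2⟩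
    · intro m
      let S := {φ | φ ∈ Φ ∧ Sat M φ (fun _ => m)}
      have := (h S (fun _ h => h.1)).1 ((hEs M S _).2 ⟨m, fun φ hφ => ⟨fun h => ⟨hφ, h⟩, fun h => h.2⟩⟩)
      obtain ⟨a, ha⟩ := (hEs A S _).1 this
      refine ⟨a, hΦk _ _ _ _ fun φ hφ => ?_⟩
      rw [ha φ hφ]
      exact ⟨fun h => h.2, fun h => ⟨hφ, h⟩⟩

end GFC

namespace GFC

open Filter

variable {U B : Type}

section ultra
variable (V : Ultrafilter ℕ) (C : ℕ → Str U B)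

def usetoid : Setoid (∀ n, (C n).Dom) where
  r f g := ∀ᶠ n in (V : Filter ℕ), f n = g n
  iseqv := ⟨fun f => Eventually.of_forall fun _ => rfl, fun h => h.mono fun _ h => h.symm,
    fun h h' => (h.and h').mono fun _ h => h.1.trans h.2⟩

def UDom : Type := Quotient (usetoid V C)

noncomputable def UDom.out (q : UDom V C) : ∀ n, (C n).Dom := Quotient.out q

def UDom.mk (f : ∀ n, (C n).Dom) : UDom V C := Quotient.mk (usetoid V C) f

theorem UDom.out_mk (f : ∀ n, (C n).Dom) :
    ∀ᶠ n in (V : Filter ℕ), UDom.out V C (UDom.mk V C f) n = f n :=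
  @Quotient.mk_out _ (usetoid V C) f

theorem UDom.eq_iff (q q' : UDom V C) :
    q = q' ↔ ∀ᶠ n in (V : Filter ℕ), UDom.out V C q n = UDom.out V C q' n := by
  constructor
  · rintro rfl; exact Eventually.of_forall fun _ => rfl
  · intro h
    have h1 : Quotient.mk (usetoid V C) (Quotient.out q) = Quotient.mk (usetoid V C) (Quotient.out q') :=
      Quotient.sound h
    exact (Quotient.out_eq (s := usetoid V C) q).symm.trans (h1.trans (Quotient.out_eq (s := usetoid V C) q'))

def Ultra : Str U B where
  Dom := UDom V C
  nonempty := ⟨UDom.mk V C fun n => Classical.choice (C n).nonempty⟩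
  u P q := ∀ᶠ n in (V : Filter ℕ), (C n).u P (UDom.out V C q n)
  b R q q' := ∀ᶠ n in (V : Filter ℕ), (C n).b R (UDom.out V C q n) (UDom.out V C q' n)

theorem los (φ : Fml U B) : ∀ σ : Var → (Ultra V C).Dom,
    Sat (Ultra V C) φ σ ↔ ∀ᶠ n in (V : Filter ℕ), Sat (C n) φ (fun v => UDom.out V C (σ v) n) := by
  have hupd : ∀ (σ : Var → (Ultra V C).Dom) (v : Var) (d : (Ultra V C).Dom) (n : ℕ), (fun u => UDom.out V C (upd σ v d u) n) =
      upd (fun u => UDom.out V C (σ u) n) v (UDom.out V C d n) := by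
    intro σ v d n; funext u; by_cases h : u = v <;> simp [upd, h]
  have hupd' : ∀ (σ : Var → (Ultra V C).Dom) (v : Var) (f : ∀ n, (C n).Dom), ∀ᶠ n in (V : Filter ℕ),
      (fun u => UDom.out V C (upd σ v (UDom.mk V C f : (Ultra V C).Dom) u) n) =
      upd (fun u => UDom.out V C (σ u) n) v (f n) := by
    intro σ v f
    filter_upwards [UDom.out_mk V C f] with n hn
    exact (hupd σ v (UDom.mk V C f) n).trans (congrArg _ hn)
  induction φ with
  | uatom P v => intro σ; rfl
  | batom R v w => intro σ; rfl
  | eqv v w => intro σ; exact UDom.eq_iff V C _ _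
  | fls => intro σ; simp [Sat]; exact V.neBot.ne
  | neg φ ih => intro σ; simp only [Sat]; rw [ih, Ultrafilter.eventually_not]
  | conj φ ψ ih1 ih2 => intro σ; simp only [Sat]; rw [ih1, ih2, eventually_and]
  | disj φ ψ ih1 ih2 => intro σ; simp only [Sat]; rw [ih1, ih2, Ultrafilter.eventually_or]
  | impl φ ψ ih1 ih2 => intro σ; simp only [Sat]; rw [ih1, ih2, Ultrafilter.eventually_imp]
  | all v φ ih =>
    intro σ
    simp only [Sat]
    constructor
    · intro h
      by_contra hn
      rw [← Ultrafilter.eventually_not] at hn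
      have : ∀ n, ∃ d, (¬ ∀ d, Sat (C n) φ (upd (fun u => UDom.out V C (σ u) n) v d)) →
          ¬ Sat (C n) φ (upd (fun u => UDom.out V C (σ u) n) v d) := by
        intro n
        by_cases hh : ∀ d, Sat (C n) φ (upd (fun u => UDom.out V C (σ u) n) v d)
        · exact ⟨Classical.choice (C n).nonempty, fun h => absurd hh h⟩
        · obtain ⟨d, hd⟩ := not_forall.1 hh
          exact ⟨d, fun _ => hd⟩
      choose f hf using this
      have h1 := (ih _).1 (h (UDom.mk V C f))
      obtain ⟨n, h1, h2, h3⟩ := (h1.and (hn.and (hupd' σ v f))).exists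
      exact hf n h2 ((congrArg (Sat (C n) φ) h3).mp h1)
    · intro h d
      rw [ih]
      filter_upwards [h] with n hn
      exact (congrArg (Sat (C n) φ) (hupd σ v d n)).mpr (hn _)
  | ex v φ ih =>
    intro σ
    simp only [Sat]
    constructor
    · rintro ⟨d, hd⟩
      rw [ih] at hd
      filter_upwards [hd] with n hn
      exact ⟨_, (congrArg (Sat (C n) φ) (hupd σ v d n)).mp hn⟩
    · intro h
      have : ∀ n, ∃ d, (∃ d, Sat (C n) φ (upd (fun u => UDom.out V C (σ u) n) v d)) →
          Sat (C n) φ (upd (fun u => UDom.out V C (σ u) n) v d) := by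
        intro n
        by_cases hh : ∃ d, Sat (C n) φ (upd (fun u => UDom.out V C (σ u) n) v d)
        · obtain ⟨d, hd⟩ := hh
          exact ⟨d, fun _ => hd⟩
        · exact ⟨Classical.choice (C n).nonempty, fun h => absurd h hh⟩
      choose f hf using this
      refine ⟨UDom.mk V C f, (ih _).2 ?_⟩
      filter_upwards [h, hupd' σ v f] with n h1 h3
      exact (congrArg (Sat (C n) φ) h3).mpr (hf n h1)

theorem ultra_satS {φ : Fml U B} (h : ∀ n, SatS (C n) φ) : SatS (Ultra V C) φ :=
  fun σ => (los V C φ σ).2 (Eventually.of_forall fun n => h n _)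

end ultra

theorem diag {V : Filter ℕ} (hV : V ≤ atTop) {P : ℕ → ℕ → Prop}
    (mono : ∀ k n, P (k+1) n → P k n) (h : ∀ k, ∀ᶠ n in V, P k n) :
    ∃ m : ℕ → ℕ, (∀ᶠ n in V, P (m n) n) ∧ ∀ k, ∀ᶠ n in V, k ≤ m n := by
  classical
  refine ⟨fun n => Nat.findGreatest (fun k => P k n) n, ?_, ?_⟩
  · filter_upwards [h 0] with n hn
    exact Nat.findGreatest_spec (P := fun k => P k n) (Nat.zero_le n) hn
  · intro k
    filter_upwards [h k, hV (eventually_ge_atTop k)] with n h1 h2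
    exact Nat.le_findGreatest h2 h1

theorem ult_pick {V : Ultrafilter ℕ} {D : Type} {S : Set D} (hS : S.Finite) {P : ℕ → D → Prop}
    (h : ∀ᶠ n in (V : Filter ℕ), ∃ d ∈ S, P n d) : ∃ d ∈ S, ∀ᶠ n in (V : Filter ℕ), P n d := by
  by_contra hn
  push Not at hn
  have h2 : ∀ d ∈ S, ∀ᶠ n in (V : Filter ℕ), ¬ P n d := hn
  have h3 := (Filter.eventually_all_finite hS).2 h2
  obtain ⟨n, ⟨d, hd, hp⟩, h4⟩ := (h.and h3).exists
  exact h4 d hd hp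

section hm
variable {V : Ultrafilter ℕ} {C : ℕ → Str U B} {A : Str U B} {SU : Set U} {SB : Set B}

theorem ultra_ag1 {a : A.Dom} {q : UDom V C}
    (h : ∀ᶠ n in (V : Filter ℕ), Ag1 A (C n) SU SB a (UDom.out V C q n)) :
    Ag1 A (Ultra V C) SU SB a q := by
  constructor
  · intro P hP
    constructor
    · intro hp; exact h.mono fun n hn => (hn.1 P hP).1 hp
    · intro hp
      obtain ⟨n, h1, h2⟩ := (h.and hp).exists
      exact (h1.1 P hP).2 h2
  · intro P hP
    constructor
    · intro hp; exact h.mono fun n hn => (hn.2 P hP).1 hp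
    · intro hp
      obtain ⟨n, h1, h2⟩ := (h.and hp).exists
      exact (h1.2 P hP).2 h2

theorem ultra_ag2 {a a' : A.Dom} {q q' : UDom V C}
    (h : ∀ᶠ n in (V : Filter ℕ), Ag2 A (C n) SU SB a a' (UDom.out V C q n) (UDom.out V C q' n)) :
    Ag2 A (Ultra V C) SU SB a a' q q' := by
  refine ⟨ultra_ag1 (h.mono fun _ h => h.1), ultra_ag1 (h.mono fun _ h => h.2.1), ?_⟩
  intro R hR
  constructor
  · constructor
    · intro hp; exact h.mono fun n hn => (hn.2.2 R hR).1.1 hp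
    · intro hp
      obtain ⟨n, h1, h2⟩ := (h.and hp).exists
      exact (h1.2.2 R hR).1.2 h2
  · constructor
    · intro hp; exact h.mono fun n hn => (hn.2.2 R hR).2.1 hp
    · intro hp
      obtain ⟨n, h1, h2⟩ := (h.and hp).exists
      exact (h1.2.2 R hR).2.2 h2

variable (V C A SU SB) in
def UZ (Stop : A.Dom → Prop) (a : A.Dom) (q : (Ultra V C).Dom) : Prop :=
  ∀ k, ∀ᶠ n in (V : Filter ℕ), KS A (C n) SU SB Stop k a (UDom.out V C q n)

theorem UZ.ag {Stop : A.Dom → Prop} {a : A.Dom} {q : (Ultra V C).Dom}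
    (h : UZ V C A SU SB Stop a q) : Ag1 A (Ultra V C) SU SB a q := ultra_ag1 (h 0)

theorem UZ.forth (hV : (V : Filter ℕ) ≤ atTop) {Stop : A.Dom → Prop} {a : A.Dom}
    {q : (Ultra V C).Dom} (h : UZ V C A SU SB Stop a q) (hs : ¬ Stop a) (a' : A.Dom) (hne : a' ≠ a)
    (hg : Guarded2 A SB a a') :
    ∃ q', q' ≠ q ∧ Ag2 A (Ultra V C) SU SB a a' q q' ∧ UZ V C A SU SB Stop a' q' := by
  obtain ⟨m, h1, h2⟩ := diag hV
    (P := fun k n => ∃ b', b' ≠ UDom.out V C q n ∧ Ag2 A (C n) SU SB a a' (UDom.out V C q n) b' ∧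
      KS A (C n) SU SB Stop k a' b')
    (by rintro k n ⟨b', h1, h2, h3⟩; exact ⟨b', h1, h2, h3.succ⟩)
    (by intro k; filter_upwards [h (k+1)] with n hn; exact (hn.2 hs).1 a' hne hg)
  have : ∀ n, ∃ b', (∃ b', b' ≠ UDom.out V C q n ∧ Ag2 A (C n) SU SB a a' (UDom.out V C q n) b' ∧
      KS A (C n) SU SB Stop (m n) a' b') → b' ≠ UDom.out V C q n ∧
      Ag2 A (C n) SU SB a a' (UDom.out V C q n) b' ∧ KS A (C n) SU SB Stop (m n) a' b' := by
    intro n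
    by_cases hh : ∃ b', b' ≠ UDom.out V C q n ∧ Ag2 A (C n) SU SB a a' (UDom.out V C q n) b' ∧
      KS A (C n) SU SB Stop (m n) a' b'
    · obtain ⟨d, hd⟩ := hh
      exact ⟨d, fun _ => hd⟩
    · exact ⟨Classical.choice (C n).nonempty, fun h => absurd h hh⟩
  choose f hf using this
  have h3 : ∀ᶠ n in (V : Filter ℕ), UDom.out V C (UDom.mk V C f) n ≠ UDom.out V C q n ∧
      Ag2 A (C n) SU SB a a' (UDom.out V C q n) (UDom.out V C (UDom.mk V C f) n) ∧
      KS A (C n) SU SB Stop (m n) a' (UDom.out V C (UDom.mk V C f) n) := by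
    filter_upwards [h1, UDom.out_mk V C f] with n h3 h4
    rw [h4]; exact hf n h3
  refine ⟨UDom.mk V C f, ?_, ultra_ag2 (h3.mono fun _ h => h.2.1), ?_⟩
  · intro e
    obtain ⟨n, h4⟩ := h3.exists
    exact h4.1 (by rw [e])
  · intro k
    filter_upwards [h3, h2 k] with n h4 h5
    exact h4.2.2.mono h5

theorem UZ.back (hV : (V : Filter ℕ) ≤ atTop) (hA : FiniteOutdeg A) {Stop : A.Dom → Prop} {a : A.Dom}
    {q : (Ultra V C).Dom} (h : UZ V C A SU SB Stop a q) (hs : ¬ Stop a) (q' : (Ultra V C).Dom)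
    (hne : q' ≠ q) (hg : Guarded2 (Ultra V C) SB q q') :
    ∃ a', a' ≠ a ∧ Ag2 A (Ultra V C) SU SB a a' q q' ∧ UZ V C A SU SB Stop a' q' := by
  have hne' : ∀ᶠ n in (V : Filter ℕ), UDom.out V C q' n ≠ UDom.out V C q n :=
    Ultrafilter.eventually_not.2 (fun h => hne ((UDom.eq_iff V C q' q).2 h))
  have hg' : ∀ᶠ n in (V : Filter ℕ), Guarded2 (C n) SB (UDom.out V C q n) (UDom.out V C q' n) := by
    obtain ⟨R, hR, hb | hb⟩ := hg
    · exact Filter.Eventually.mono hb fun n hn => ⟨R, hR, Or.inl hn⟩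
    · exact Filter.Eventually.mono hb fun n hn => ⟨R, hR, Or.inr hn⟩
  obtain ⟨m, h1, h2⟩ := diag hV
    (P := fun k n => ∃ a', a' ≠ a ∧ Guarded2 A SB a a' ∧
      Ag2 A (C n) SU SB a a' (UDom.out V C q n) (UDom.out V C q' n) ∧
      KS A (C n) SU SB Stop k a' (UDom.out V C q' n))
    (by rintro k n ⟨b', h1, h0, h2, h3⟩; exact ⟨b', h1, h0, h2, h3.succ⟩)
    (by
      intro k
      filter_upwards [h (k+1), hne', hg'] with n hn h1 h2
      obtain ⟨a', h3, h4, h5⟩ := (hn.2 hs).2 _ h1 h2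
      exact ⟨a', h3, h4.guarded.2 h2, h4, h5⟩)
  obtain ⟨a', h3, h4⟩ := ult_pick (hA a) (V := V)
    (P := fun n a' => Ag2 A (C n) SU SB a a' (UDom.out V C q n) (UDom.out V C q' n) ∧
      KS A (C n) SU SB Stop (m n) a' (UDom.out V C q' n))
    (by
      filter_upwards [h1] with n hn
      obtain ⟨a', h1, ⟨R, _, h2⟩, h3⟩ := hn
      exact ⟨a', ⟨h1, R, h2⟩, h3⟩)
  refine ⟨a', h3.1, ultra_ag2 (h4.mono fun _ h => h.1), fun k => ?_⟩
  filter_upwards [h4, h2 k] with n h5 h6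
  exact h5.2.mono h6

theorem UZ.bisim (hV : (V : Filter ℕ) ≤ atTop) (hA : FiniteOutdeg A) {a : A.Dom}
    {q : (Ultra V C).Dom} (h : UZ V C A SU SB (fun _ => False) a q) :
    Bisim A (Ultra V C) SU SB a q := by
  refine ⟨UZ V C A SU SB (fun _ => False), ⟨?_, ?_, ?_⟩, h⟩
  · intro a b h; exact (atp1_iff _ _ _ _ _ _).2 h.ag
  · intro a b h a' h1 h2
    obtain ⟨b', h3, h4, h5⟩ := h.forth hV id a' h1 h2
    exact ⟨b', h3, (atp2_iff _ _ _ _ _ _ _ _).2 h4, h5⟩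
  · intro a b h a' h1 h2
    obtain ⟨b', h3, h4, h5⟩ := h.back hV hA id a' h1 h2
    exact ⟨b', h3, (atp2_iff _ _ _ _ _ _ _ _).2 h4, h5⟩

theorem UZ.ptdelim (hV : (V : Filter ℕ) ≤ atTop) (hA : FiniteOutdeg A) {abot a : A.Dom}
    {q : (Ultra V C).Dom} (h : UZ V C A SU SB (fun c => c = abot) a q) :
    PtDelimBisim A (Ultra V C) SU SB abot a q := by
  refine ⟨UZ V C A SU SB (fun c => c = abot), ⟨?_, ?_, ?_⟩, h⟩
  · intro a b h; exact (atp1_iff _ _ _ _ _ _).2 h.ag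
  · intro a b h hs a' h1 h2
    obtain ⟨b', h3, h4, h5⟩ := h.forth hV hs a' h1 h2
    exact ⟨b', h3, (atp2_iff _ _ _ _ _ _ _ _).2 h4, h5⟩
  · intro a b h hs a' h1 h2
    obtain ⟨b', h3, h4, h5⟩ := h.back hV hA hs a' h1 h2
    exact ⟨b', h3, (atp2_iff _ _ _ _ _ _ _ _).2 h4, h5⟩

end hm
end GFC

namespace GFC

open Filter

variable {U B : Type}

def SP (F : Forest U B) (SB : Set B) (p c : F.Dom) : Prop :=
  F.parent p c ∧ SigAdj F.toStr SB p c

structure PIso (F : Forest U B) (s c : F.Dom) (G : F.Dom → F.Dom → Prop) : Prop where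
  root : G s c
  fwd : ∀ {x y x'}, G x y → F.parent x x' → ∃ y', G x' y' ∧ F.parent y y'
  bwd : ∀ {x y y'}, G x y → F.parent y y' → ∃ x', G x' y' ∧ F.parent x x'
  inj : ∀ {x y x' y'}, G x y → G x' y' → (x = x' ↔ y = y')
  up : ∀ {x y}, G x y → (x = s ∧ y = c) ∨ ∃ p q, F.parent p x ∧ F.parent q y ∧ G p q
  uu : ∀ {x y} (P : U), G x y → (F.u P x ↔ F.u P y)
  bb : ∀ {x y x' y'} (R : B), G x y → G x' y' → (F.b R x x' ↔ F.b R y y')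

theorem PIso.symm {F : Forest U B} {s c : F.Dom} {G} (h : PIso F s c G) :
    PIso F c s (fun y x => G x y) where
  root := h.root
  fwd h1 h2 := h.bwd h1 h2
  bwd h1 h2 := h.fwd h1 h2
  inj h1 h2 := (h.inj h1 h2).symm
  up h1 := by
    rcases h.up h1 with ⟨h2, h3⟩ | ⟨p, q, h2, h3, h4⟩
    · exact Or.inl ⟨h3, h2⟩
    · exact Or.inr ⟨q, p, h3, h2, h4⟩
  uu P h1 := (h.uu P h1).symm
  bb R h1 h2 := (h.bb R h1 h2).symm

theorem PIso.trans {F : Forest U B} {s c d : F.Dom} {G G'} (h : PIso F s c G) (h' : PIso F c d G') :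
    PIso F s d (fun x z => ∃ y, G x y ∧ G' y z) where
  root := ⟨c, h.root, h'.root⟩
  fwd := by
    rintro x z x' ⟨y, h1, h2⟩ h3
    obtain ⟨y', h4, h5⟩ := h.fwd h1 h3
    obtain ⟨z', h6, h7⟩ := h'.fwd h2 h5
    exact ⟨z', ⟨y', h4, h6⟩, h7⟩
  bwd := by
    rintro x z x' ⟨y, h1, h2⟩ h3
    obtain ⟨y', h4, h5⟩ := h'.bwd h2 h3
    obtain ⟨z', h6, h7⟩ := h.bwd h1 h5
    exact ⟨z', ⟨y', h6, h4⟩, h7⟩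
  inj := by
    rintro x z x' z' ⟨y, h1, h2⟩ ⟨y', h3, h4⟩
    exact (h.inj h1 h3).trans (h'.inj h2 h4)
  up := by
    rintro x z ⟨y, h1, h2⟩
    rcases h.up h1 with ⟨e1, e2⟩ | ⟨p, q, h3, h4, h5⟩
    · subst e2
      exact Or.inl ⟨e1, (h'.inj h2 h'.root).1 rfl⟩
    · rcases h'.up h2 with ⟨e1, e2⟩ | ⟨q', r, h6, h7, h8⟩
      · subst e1
        exact Or.inl ⟨(h.inj h1 h.root).2 rfl, e2⟩
      · have := F.parent_unique h4 h6
        subst this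
        exact Or.inr ⟨p, r, h3, h7, q, h5, h8⟩
  uu P := by
    rintro ⟨y, h1, h2⟩
    exact (h.uu P h1).trans (h'.uu P h2)
  bb R := by
    rintro ⟨y, h1, h2⟩ ⟨y', h3, h4⟩
    exact (h.bb R h1 h3).trans (h'.bb R h2 h4)

theorem PIso.of_iso {F : Forest U B} {s c : F.Dom} (h : F.SubtreeIso s c) : ∃ G, PIso F s c G := by
  obtain ⟨f, h1, h2, h3, h4⟩ := h
  have hup : ∀ {s x : F.Dom}, x ∈ F.desc s → x = s ∨ ∃ p, p ∈ F.desc s ∧ F.parent p x := by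
    intro s x hx
    rcases Relation.ReflTransGen.cases_tail hx with h | ⟨p, h, h'⟩
    · exact Or.inl h
    · exact Or.inr ⟨p, h, h'⟩
  refine ⟨fun x y => ∃ hx : x ∈ F.desc s, (f ⟨x, hx⟩).val = y, ⟨⟨Relation.ReflTransGen.refl, h1⟩,
    ?_, ?_, ?_, ?_, ?_, ?_⟩⟩
  · rintro x y x' ⟨hx, rfl⟩ hp
    have hx' : x' ∈ F.desc s := Relation.ReflTransGen.tail hx hp
    exact ⟨_, ⟨hx', rfl⟩, (h2 ⟨x, hx⟩ ⟨x', hx'⟩).1 hp⟩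
  · rintro x y y' ⟨hx, rfl⟩ hp
    have hy' : y' ∈ F.desc c := Relation.ReflTransGen.tail (f ⟨x, hx⟩).2 hp
    have e : f (f.symm ⟨y', hy'⟩) = ⟨y', hy'⟩ := f.apply_symm_apply _
    refine ⟨(f.symm ⟨y', hy'⟩).val, ⟨(f.symm ⟨y', hy'⟩).2, ?_⟩, ?_⟩
    · exact congrArg Subtype.val e
    · refine (h2 ⟨x, hx⟩ (f.symm ⟨y', hy'⟩)).2 ?_
      rw [e]; exact hp
  · rintro x y x' y' ⟨hx, rfl⟩ ⟨hx', rfl⟩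
    constructor
    · rintro rfl; rfl
    · intro e
      exact congrArg Subtype.val (f.injective (Subtype.ext e))
  · rintro x y ⟨hx, rfl⟩
    rcases hup hx with rfl | ⟨p, hp, hpx⟩
    · exact Or.inl ⟨rfl, h1⟩
    · exact Or.inr ⟨p, _, hpx, (h2 ⟨p, hp⟩ ⟨x, hx⟩).1 hpx, hp, rfl⟩
  · rintro x y P ⟨hx, rfl⟩
    exact h3 P ⟨x, hx⟩
  · rintro x y x' y' R ⟨hx, rfl⟩ ⟨hx', rfl⟩
    exact h4 R ⟨x, hx⟩ ⟨x', hx'⟩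

theorem PIso.transfer {F : Forest U B} {s c : F.Dom} {G} (h : PIso F s c G) {M : Str U B}
    {SU : Set U} {SB : Set B} {Stop : F.Dom → Prop}
    (hst : Stop s ∨ ((∀ p, ¬ SP F SB p s) ∧ ∀ p, ¬ SP F SB p c)) (k : ℕ) :
    ∀ {x y : F.Dom} {b : M.Dom}, G x y → KS F.toStr M SU SB (fun _ => False) k y b →
      KS F.toStr M SU SB Stop k x b := by
  have ag1 : ∀ {x y : F.Dom} {b : M.Dom}, G x y → Ag1 F.toStr M SU SB y b →
      Ag1 F.toStr M SU SB x b := fun g a =>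
    ⟨fun P hP => (h.uu P g).trans (a.1 P hP), fun R hR => (h.bb R g g).trans (a.2 R hR)⟩
  have ag2 : ∀ {x y x' y' : F.Dom} {b b' : M.Dom}, G x y → G x' y' →
      Ag2 F.toStr M SU SB y y' b b' → Ag2 F.toStr M SU SB x x' b b' := fun g g' a =>
    ⟨ag1 g a.1, ag1 g' a.2.1, fun R hR => ⟨(h.bb R g g').trans (a.2.2 R hR).1,
      (h.bb R g' g).trans (a.2.2 R hR).2⟩⟩
  have hadj : ∀ {x x' : F.Dom}, x' ≠ x → Guarded2 F.toStr SB x x' →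
      F.parent x x' ∨ SP F SB x' x := by
    rintro x x' hne ⟨R, hR, hb⟩
    rcases (F.adj_iff x x').1 ⟨hne.symm, R, hb⟩ with h | h
    · exact Or.inl h
    · exact Or.inr ⟨h, hne, R, hR, hb.symm⟩
  induction k with
  | zero => intro x y b g hk; exact ag1 g hk
  | succ k ih =>
    intro x y b g hk
    refine ⟨ag1 g hk.1, fun hs => ?_⟩
    have hk2 := hk.2 id
    constructor
    · intro x' hne hg
      have : ∃ y', G x' y' := by
        rcases hadj hne hg with h1 | h1
        · obtain ⟨y', h2, _⟩ := h.fwd g h1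
          exact ⟨y', h2⟩
        · rcases h.up g with ⟨rfl, rfl⟩ | ⟨p, q, h2, h3, h4⟩
          · rcases hst with h2 | h2
            · exact absurd h2 hs
            · exact absurd h1 (h2.1 _)
          · have := F.parent_unique h1.1 h2
            subst this
            exact ⟨q, h4⟩
      obtain ⟨y', g'⟩ := this
      have hne' : y' ≠ y := fun e => hne ((h.inj g' g).2 e)
      have hg' : Guarded2 F.toStr SB y y' := by
        obtain ⟨R, hR, hb⟩ := hg
        exact ⟨R, hR, hb.imp (h.bb R g g').1 (h.bb R g' g).1⟩
      obtain ⟨b', h1, h2, h3⟩ := hk2.1 y' hne' hg'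
      exact ⟨b', h1, ag2 g g' h2, ih g' h3⟩
    · intro b' hb hg
      obtain ⟨y', h1, h2, h3⟩ := hk2.2 b' hb hg
      have hg' := h2.guarded.2 hg
      have : ∃ x', G x' y' := by
        rcases hadj h1 hg' with h1 | h1
        · obtain ⟨y', h2, _⟩ := h.bwd g h1
          exact ⟨y', h2⟩
        · rcases h.up g with ⟨rfl, rfl⟩ | ⟨p, q, h2, h3, h4⟩
          · rcases hst with h2 | h2
            · exact absurd h2 hs
            · exact absurd h1 (h2.2 _)
          · have := F.parent_unique h1.1 h3
            subst this
            exact ⟨p, h4⟩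
      obtain ⟨x', g'⟩ := this
      exact ⟨x', fun e => h1 ((h.inj g' g).1 e), ag2 g g' h2, ih g' h3⟩

theorem PIso.itr {F : Forest U B} {s c : F.Dom} {G} (h : PIso F s c G) {SB : Set B} (m : ℕ) :
    ∀ {y : F.Dom}, Itr (SP F SB) m c y → ∃ x, G x y ∧ Itr (SP F SB) m s x := by
  induction m with
  | zero =>
    intro y hy
    have hy : c = y := hy
    subst hy
    exact ⟨s, h.root, rfl⟩
  | succ m ih =>
    rintro y ⟨d, hd, hp, hne, R, hR, hb⟩
    obtain ⟨x, g, hx⟩ := ih hd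
    obtain ⟨x', g', hp'⟩ := h.bwd g hp
    exact ⟨x', g', x, hx, hp', fun e => hne ((h.inj g g').1 e), R, hR,
      hb.imp (h.bb R g g').2 (h.bb R g' g).2⟩

theorem SP_fin {F : Forest U B} (hA : FiniteOutdeg F.toStr) {SB : Set B} (d : F.Dom) :
    {x | SP F SB d x}.Finite :=
  (hA d).subset fun _ hx => ⟨hx.2.1.symm, hx.2.2.imp fun _ h => h.2⟩

theorem Itr_fin {F : Forest U B} (hA : FiniteOutdeg F.toStr) {SB : Set B} (m : ℕ) (s : F.Dom) :
    {x | Itr (SP F SB) m s x}.Finite := by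
  induction m with
  | zero =>
    refine (Set.finite_singleton s).subset ?_
    intro x hx
    have hx : s = x := hx
    exact hx.symm
  | succ m ih =>
    refine (ih.biUnion fun d _ => SP_fin hA (SB := SB) d).subset ?_
    rintro x ⟨d, hd, hx⟩
    exact Set.mem_biUnion hd hx

theorem root_exists {D : Type} {r : D → D → Prop} {a : D} (N : ℕ) (h : ¬ ∃ c, Itr r N c a) :
    ∃ c, ∃ m < N, Itr r m c a ∧ ∀ p, ¬ r p c := by
  induction N with
  | zero => exact absurd ⟨a, rfl⟩ h
  | succ N ih =>
    by_cases hc : ∃ c, Itr r N c a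
    · obtain ⟨c, hc⟩ := hc
      refine ⟨c, N, Nat.lt_succ_self N, hc, fun p hp => h ⟨p, ?_⟩⟩
      have h1 : Itr r 1 p c := ⟨p, rfl, hp⟩
      have := h1.trans hc
      rwa [Nat.add_comm] at this
    · obtain ⟨c, m, hm, h1⟩ := ih hc
      exact ⟨c, m, Nat.lt_succ_of_lt hm, h1⟩

theorem Itr.prec {F : Forest U B} {SB : Set B} {n : ℕ} {a c : F.Dom}
    (h : Itr (SP F SB) (n+1) a c) : F.prec SB a c := by
  have := Itr.transGen h
  exact ⟨Relation.ReflTransGen.mono (r := SP F SB) (fun _ _ h => h.2) _ _ this.to_reflTransGen,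
    Relation.TransGen.mono (r := SP F SB) (fun _ _ h => h.1) _ _ this⟩

theorem konig {V : Ultrafilter ℕ} (hV : (V : Filter ℕ) ≤ atTop) {D : Type} {r : D → D → Prop}
    (hf : ∀ d, {x | r d x}.Finite) {P : D → Prop} {s : D}
    (h : ∀ M : ℕ, ∃ N ≥ M, ∃ a, Itr r N s a ∧ P a) :
    ∃ d : ℕ → D, d 0 = s ∧ (∀ i, r (d i) (d (i+1))) ∧ ∀ i, ∀ M : ℕ, ∃ N ≥ M, ∃ a, Itr r N (d i) a ∧ P a := by
  let Deep : D → Prop := fun s => ∀ M : ℕ, ∃ N ≥ M, ∃ a, Itr r N s a ∧ P a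
  have step : ∀ s : {s // Deep s}, ∃ t : {s // Deep s}, r s.1 t.1 := by
    rintro ⟨s, hs⟩
    obtain ⟨t, ht, h2⟩ := ult_pick (V := V) (hf s)
      (P := fun M t => ∃ N ≥ M, ∃ a, Itr r N t a ∧ P a)
      (Eventually.of_forall fun M => by
        obtain ⟨N, hN, a, h1, h2⟩ := hs (M+1)
        obtain ⟨N', rfl⟩ : ∃ N', N = N' + 1 := ⟨N - 1, by omega⟩
        obtain ⟨t, ht, h3⟩ := Itr.head h1
        exact ⟨t, ht, N', by omega, a, h3, h2⟩)
    refine ⟨⟨t, fun M => ?_⟩, ht⟩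
    obtain ⟨n, h3, N, hN, h4⟩ := ((Filter.Eventually.filter_mono hV (eventually_ge_atTop M)).and h2).exists
    exact ⟨N, le_trans h3 hN, h4⟩
  choose nx hnx using step
  let d : ℕ → {s // Deep s} := fun n => Nat.rec ⟨s, h⟩ (fun _ t => nx t) n
  exact ⟨fun i => (d i).1, rfl, fun i => hnx (d i), fun i => (d i).2⟩

theorem dir_forth {φ₁ φ₂ : Fml U B} {SU : Set U} {SB : Set B}
    (hSU : SU.Finite) (hSB : SB.Finite) (hent : GF2Entails SU SB φ₁ φ₂)
    (F : Forest U B) (hF : SatS F.toStr φ₁) (hreg : F.Regular) (hA : FiniteOutdeg F.toStr) :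
      ∃ Bm : Str U B, SatS Bm φ₂ ∧
        (∀ a, ∃ b, Bisim F.toStr Bm SU SB a b) ∧
        (∀ b : Bm.Dom,
          (∃ a, Bisim F.toStr Bm SU SB a b) ∨
          (∃ (abot : F.Dom) (as as' : ℕ → F.Dom),
            F.prec SB abot (as 0) ∧
            (∀ i, F.prec SB (as i) (as (i+1))) ∧
            (∀ i, F.prec SB (as i) (as' i)) ∧
            (∀ i, PtDelimBisim F.toStr Bm SU SB abot (as' i) b))) := by
  have hC : ∀ n : ℕ, ∃ M : Str U B, SatS M φ₂ ∧
      (∀ a, ∃ m, KS F.toStr M SU SB (fun _ => False) n a m) ∧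
      (∀ m, ∃ a, KS F.toStr M SU SB (fun _ => False) n a m) := by
    intro n
    obtain ⟨χ, h1, h2, h3⟩ := global_char hSU hSB n F.toStr
    by_contra hn
    have h4 : Entails φ₂ (.neg χ) := by
      intro M hM
      rw [satS_neg M h1.2.1]
      intro hχ
      exact hn ⟨M, hM, h3 M hχ⟩
    have h5 := hent (.neg χ) ⟨.neg h1.1, h1.2.1, h1.2.2.1, h1.2.2.2⟩ h4 F.toStr hF
    exact (satS_neg _ h1.2.1).1 h5 h2
  choose C hC2 hCf hCb using hC
  let V : Ultrafilter ℕ := hyperfilter ℕ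
  have hV : (V : Filter ℕ) ≤ atTop := Nat.hyperfilter_le_atTop
  refine ⟨Ultra V C, ultra_satS V C hC2, ?_, ?_⟩
  · intro a
    choose f hf using fun n => hCf n a
    refine ⟨UDom.mk V C f, UZ.bisim hV hA fun k => ?_⟩
    filter_upwards [UDom.out_mk V C f, hV (eventually_ge_atTop k)] with n h1 h2
    rw [h1]; exact (hf n).mono h2
  · intro q
    choose a ha using fun n => hCb n (UDom.out V C q n)
    obtain ⟨S, hS, hSi⟩ := hreg
    by_cases hN : ∃ N, ∀ᶠ n in (V : Filter ℕ), ¬ ∃ c, Itr (SP F SB) N c (a n)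
    · left
      obtain ⟨N, hN⟩ := hN
      obtain ⟨s, hs, h1⟩ := ult_pick (V := V) hS
        (P := fun n s => ∃ r G, PIso F s r G ∧ (∀ p, ¬ SP F SB p r) ∧
          ∃ a', (∃ m < N, Itr (SP F SB) m s a') ∧ G a' (a n)) (by
          filter_upwards [hN] with n hn
          obtain ⟨r, m, hm, h1, h2⟩ := root_exists N hn
          obtain ⟨s, hs, hi⟩ := hSi r
          obtain ⟨G, hG⟩ := PIso.of_iso hi
          obtain ⟨a', g, h3⟩ := hG.itr m h1
          exact ⟨s, hs, r, G, hG, h2, a', ⟨m, hm, h3⟩, g⟩)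
      have hfin : {a' | ∃ m < N, Itr (SP F SB) m s a'}.Finite := by
        refine ((Set.finite_lt_nat N).biUnion fun m _ => Itr_fin hA (SB := SB) m s).subset ?_
        rintro x ⟨m, hm, hx⟩
        exact Set.mem_biUnion hm hx
      obtain ⟨a', _, h2⟩ := ult_pick (V := V) hfin
        (P := fun n a' => ∃ r G, PIso F s r G ∧ (∀ p, ¬ SP F SB p r) ∧ G a' (a n)) (by
          filter_upwards [h1] with n hn
          obtain ⟨r, G, h3, h4, a', h5, h6⟩ := hn
          exact ⟨a', h5, r, G, h3, h4, h6⟩)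
      obtain ⟨n1, r1, G1, hG1, hr1, g1⟩ := h2.exists
      refine ⟨a n1, UZ.bisim hV hA fun k => ?_⟩
      filter_upwards [h2, hV (eventually_ge_atTop k)] with n hn hk
      obtain ⟨r, G, hG, hr, g⟩ := hn
      exact (hG1.symm.trans hG).transfer (Or.inr ⟨hr1, hr⟩) k ⟨a', g1, g⟩ ((ha n).mono hk)
    · right
      push Not at hN
      have key : ∀ N, ∃ s ∈ S, ∃ a', Itr (SP F SB) N s a' ∧
          UZ V C F.toStr SU SB (fun c => c = s) a' q := by
        intro N
        have hN' : ∀ᶠ n in (V : Filter ℕ), ∃ c, Itr (SP F SB) N c (a n) := by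
          have := hN N
          first
            | exact Ultrafilter.frequently_iff_eventually.1 this
            | simpa using this
        obtain ⟨s, hs, h1⟩ := ult_pick (V := V) hS
          (P := fun n s => ∃ a', Itr (SP F SB) N s a' ∧
            KS F.toStr (C n) SU SB (fun c => c = s) n a' (UDom.out V C q n)) (by
            filter_upwards [hN'] with n hn
            obtain ⟨c, hc⟩ := hn
            obtain ⟨s, hs, hi⟩ := hSi c
            obtain ⟨G, hG⟩ := PIso.of_iso hi
            obtain ⟨a', g, h3⟩ := hG.itr N hc
            exact ⟨s, hs, a', h3, hG.transfer (Stop := fun c => c = s) (Or.inl rfl) n g (ha n)⟩)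
        obtain ⟨a', h2, h3⟩ := ult_pick (V := V) (Itr_fin hA (SB := SB) N s)
          (P := fun n a' => KS F.toStr (C n) SU SB (fun c => c = s) n a' (UDom.out V C q n)) h1
        refine ⟨s, hs, a', h2, fun k => ?_⟩
        filter_upwards [h3, hV (eventually_ge_atTop k)] with n h4 h5
        exact h4.mono h5
      obtain ⟨s, hs, h1⟩ := ult_pick (V := V) hS (Eventually.of_forall key)
      obtain ⟨d, h2, h3, h4⟩ := konig hV (r := SP F SB) (fun d => SP_fin hA d)
        (P := fun a' => UZ V C F.toStr SU SB (fun c => c = s) a' q) (s := s) (by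
          intro M
          obtain ⟨N, h5, h6⟩ := ((Filter.Eventually.filter_mono hV (eventually_ge_atTop M)).and h1).exists
          exact ⟨N, h5, h6⟩)
      have hd : ∀ i, F.prec SB (d i) (d (i+1)) := fun i => Itr.prec (n := 0) ⟨d i, rfl, h3 i⟩
      have h5 : ∀ i, ∃ a', F.prec SB (d (i+1)) a' ∧ UZ V C F.toStr SU SB (fun c => c = s) a' q := by
        intro i
        obtain ⟨N, hN, a', h6, h7⟩ := h4 (i+1) 1
        obtain ⟨N', rfl⟩ : ∃ N', N = N' + 1 := ⟨N - 1, by omega⟩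
        exact ⟨a', Itr.prec h6, h7⟩
      choose as' h6 h7 using h5
      refine ⟨s, fun i => d (i+1), as', ?_, fun i => hd (i+1), h6, fun i => (h7 i).ptdelim hV hA⟩
      have := hd 0
      rwa [h2] at this

end GFC

namespace GFC

/-- Theorem charsimp-precursor: `φ₁ ⊨_Σ φ₂` iff for every
regular forest model `𝔄` of `φ₁` of finite outdegree there is a model `𝔅` of
`φ₂` such that (1) every `a` is GF²(Σ)-bisimilar to some `b`, and (2) for every
`b` either (a) some `a` is GF²(Σ)-bisimilar to `b`, or (b) there are
`a_⊥ ≺ a₀ ≺ a₁ ≺ ⋯` and `a'₀, a'₁, …` with `a_i ≺ a'_i` and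
`(𝔄,a'_i) ∼^{a_⊥}_Σ (𝔅,b)` for all `i`. -/
theorem gf2_entails_iff_delimited_bisimulation_characterization
    {U B : Type} (φ₁ φ₂ : Fml U B) (SU : Set U) (SB : Set B)
    (hSU : SU.Finite) (hSB : SB.Finite)
    (h1 : IsGF2 φ₁) (h1s : φ₁.IsSentence)
    (h2 : IsGF2 φ₂) (h2s : φ₂.IsSentence) :
    GF2Entails SU SB φ₁ φ₂ ↔
    (∀ F : Forest U B, SatS F.toStr φ₁ → F.Regular → FiniteOutdeg F.toStr →
      ∃ Bm : Str U B, SatS Bm φ₂ ∧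
        (∀ a, ∃ b, Bisim F.toStr Bm SU SB a b) ∧
        (∀ b : Bm.Dom,
          (∃ a, Bisim F.toStr Bm SU SB a b) ∨
          (∃ (abot : F.Dom) (as as' : ℕ → F.Dom),
            F.prec SB abot (as 0) ∧
            (∀ i, F.prec SB (as i) (as (i+1))) ∧
            (∀ i, F.prec SB (as i) (as' i)) ∧
            (∀ i, PtDelimBisim F.toStr Bm SU SB abot (as' i) b)))) := by
  exact ⟨fun h F hF hr hA => dir_forth hSU hSB h F hF hr hA, dir_back h1 h1s⟩

end GFC
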